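/- A discrete group G is C*-simple if and only if G has no amenable recurrent subgroup that is either a finite normal subgroup of G or a normalish subgroup of G. -/

import Mathlib

noncomputable section
open scoped ENNReal ComplexOrder lp
open MeasureTheory
set_option maxHeartbeats 1000000
set_option synthInstance.maxHeartbeats 1000000

universe u

variable {G : Type u} [Group G]

theorem translat_mem (g : G) (f : ℓ²(G, ℂ)) : Memℓp (fun h => f (g⁻¹ * h)) 2 := by
  have hf : Summable fun i : G => ‖f i‖ ^ (2 : ℝ≥0∞).toReal :=
    (memℓp_gen_iff (by norm_num)).1 (lp.memℓp f)
  exact memℓp_gen ((Equiv.mulLeft g⁻¹).summable_iff.2 hf)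

/-- The left regular representation of `g ∈ G` as a linear isometric bijection of `ℓ²(G)`,
given by `(λ_g ξ)(h) = ξ(g⁻¹ h)`. -/
def lregE (g : G) : ℓ²(G, ℂ) ≃ₗᵢ[ℂ] ℓ²(G, ℂ) :=
{ toFun := fun f => ⟨fun h => f (g⁻¹ * h), translat_mem g f⟩
  invFun := fun f => ⟨fun h => f (g * h), by
    have := translat_mem g⁻¹ f; simpa using! this⟩
  map_add' := by intro f₁ f₂; ext h; simp [lp.coeFn_add]; rfl
  map_smul' := by intro c f; ext h; simp [lp.coeFn_smul]
  left_inv := by intro f; ext h; simp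
  right_inv := by intro f; ext h; simp
  norm_map' := by
    intro f
    rw [lp.norm_eq_tsum_rpow (by norm_num) f, lp.norm_eq_tsum_rpow (by norm_num)]
    congr 1
    exact (Equiv.mulLeft g⁻¹).tsum_eq (fun h => ‖f h‖ ^ (2 : ℝ≥0∞).toReal) }

/-- The left regular representation `λ` as bounded operators on `ℓ²(G)`. -/
def lreg (g : G) : ℓ²(G, ℂ) →L[ℂ] ℓ²(G, ℂ) :=
  (lregE g).toContinuousLinearEquiv.toContinuousLinearMap

variable (G) in
/-- The reduced group C*-algebra `C*_λ(G)`: the norm-closed star subalgebra of the algebra of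
bounded operators on `ℓ²(G)` generated by the image of the left regular representation. -/
def redCstar : StarSubalgebra ℂ (ℓ²(G, ℂ) →L[ℂ] ℓ²(G, ℂ)) :=
  (StarAlgebra.adjoin ℂ (Set.range (lreg (G := G)))).topologicalClosure

variable (G) in
/-- `G` is C*-simple: `C*_λ(G)` has no closed two-sided ideals other than `{0}` and the
whole algebra. -/
def IsCstarSimple : Prop :=
  ∀ I : TwoSidedIdeal (redCstar G), IsClosed (I : Set (redCstar G)) → I = ⊥ ∨ I = ⊤

attribute [irreducible] redCstar lreg lregE

variable (G) in
/-- The Chabauty topology on the space of subgroups of `G`: the topology induced from the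
product topology on `{0,1}^G` by identifying a subgroup with its indicator function. -/
def chabauty : TopologicalSpace (Subgroup G) :=
  letI : ∀ p : Prop, Decidable p := Classical.propDecidable
  TopologicalSpace.induced (fun (H : Subgroup G) (g : G) => decide (g ∈ H))
    (inferInstance : TopologicalSpace (G → Bool))

attribute [instance] chabauty

/-- The conjugate subgroup `gHg⁻¹`. -/
def conjSub (g : G) (H : Subgroup G) : Subgroup G :=
  H.map (MulAut.conj g).toMonoidHom

/-- `H` is a recurrent subgroup of `G`: the trivial subgroup does not belong to the Chabauty
closure of the set of conjugates of `H`. -/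
def IsRecurrent (H : Subgroup G) : Prop :=
  (⊥ : Subgroup G) ∉ closure {K : Subgroup G | ∃ g : G, K = conjSub g H}

/-- Left translation of a bounded function on a group `H`. -/
def translInfty {H : Type*} [Group H] (h : H) (f : lp (fun _ : H => ℝ) ∞) :
    lp (fun _ : H => ℝ) ∞ :=
  ⟨fun k => f (h⁻¹ * k), by
    apply memℓp_infty
    have : (Set.range fun k => ‖f (h⁻¹ * k)‖) = Set.range fun k => ‖f k‖ :=
      (Equiv.mulLeft h⁻¹).surjective.range_comp (fun k => ‖f k‖)
    rw [this]
    exact memℓp_infty_iff.1 (lp.memℓp f)⟩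

/-- A group `H` is amenable: there exists a left-invariant mean on `ℓ∞(H)`, i.e. a unital
positive linear functional invariant under left translation. -/
def IsAmenable (H : Type*) [Group H] : Prop :=
  ∃ m : lp (fun _ : H => ℝ) ∞ →ₗ[ℝ] ℝ,
    m 1 = 1 ∧ (∀ f : lp (fun _ : H => ℝ) ∞, (∀ k, 0 ≤ f k) → 0 ≤ m f) ∧
      ∀ (h : H) (f : lp (fun _ : H => ℝ) ∞), m (translInfty h f) = m f

/-- `H` is a normalish subgroup of `G`: every finite intersection of conjugates of `H`
is infinite. -/
def IsNormalish (H : Subgroup G) : Prop :=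
  ∀ (n : ℕ) (g : Fin n → G), ((⨅ i : Fin n, conjSub (g i) H) : Set G).Infinite

/-!
Both directions are tested on one space `X`: a compact `G`-space in which every probability measure
can be translated arbitrarily close to every point mass, and whose point stabilizers are amenable.
It is the closure of the set of extreme points of a minimal affine flow of means on `G`.

If no finite set of nontrivial elements `F` meets all point stabilizers of `X`, then `C*_λ(G)` is
simple: conjugating a state that kills an ideal moves the measure it induces on `X` close to a point
mass at a point moved by all of `F`, which makes the state close to the canonical trace. If such an
`F` exists, a point stabilizer or the intersection of all of them yields the required subgroup.

Conversely, an amenable recurrent subgroup forces some `t ≠ 1` to fix a nonempty open set of `X`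
pointwise. For a point `x` of `X`, the representation on `ℓ²(X)` admits, when `C*_λ(G)` is simple,
a state that vanishes on every `s ≠ 1`. Conjugates of that state concentrate where `t` acts
trivially, so they should tend to `1` at `t`, yet they all vanish there.
-/

open Set Topology

section StateSpace
variable {V : Type*} [NormedAddCommGroup V] [NormedSpace ℝ V] {P : Set V} {e : V}

/-- The state space of a normed space with cone of positive elements `P` and unit `e`: the
functionals that are positive on `P` and take the value `1` at `e`, with the weak-* topology. -/
def stateSpace (P : Set V) (e : V) : Set (WeakDual ℝ V) :=
  {φ | φ e = 1 ∧ ∀ v ∈ P, 0 ≤ φ v}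

theorem isClosed_stateSpace : IsClosed (stateSpace P e) := by
  simp only [stateSpace, ofPred_and, ofPred_forall]
  exact (isClosed_eq (WeakDual.eval_continuous e) continuous_const).inter
    (isClosed_biInter fun v _ => isClosed_le continuous_const (WeakDual.eval_continuous v))

theorem convex_stateSpace : Convex ℝ (stateSpace P e) := by
  rintro φ ⟨hφe, hφ⟩ ψ ⟨hψe, hψ⟩ a b ha hb hab
  refine ⟨?_, fun v hv => ?_⟩
  · change a * φ e + b * ψ e = 1
    rw [hφe, hψe, mul_one, mul_one, hab]
  · exact add_nonneg (mul_nonneg ha (hφ v hv)) (mul_nonneg hb (hψ v hv))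

theorem isCompact_stateSpace (hP : ∀ v : V, ‖v‖ • e - v ∈ P) :
    IsCompact (stateSpace P e) := by
  refine (WeakDual.isCompact_closedBall (𝕜 := ℝ) (0 : StrongDual ℝ V) 1).of_isClosed_subset
    isClosed_stateSpace ?_
  rintro φ ⟨hφe, hφ⟩
  have hle (v : V) : φ v ≤ ‖v‖ := by
    have := hφ _ (hP v)
    rw [map_sub, map_smul, hφe, smul_eq_mul, mul_one] at this
    linarith
  rw [mem_preimage, mem_closedBall_zero_iff]
  refine ContinuousLinearMap.opNorm_le_bound _ zero_le_one fun v => abs_le.2 ?_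
  have := hle (-v)
  rw [map_neg, norm_neg] at this
  exact ⟨by change _ ≤ φ v; linarith, by simpa using hle v⟩

end StateSpace

instance (V : Type*) [AddCommGroup V] [TopologicalSpace V] [Module ℝ V] :
    LocallyConvexSpace ℝ (WeakDual ℝ V) :=
  WeakBilin.locallyConvexSpace (B := topDualPairing ℝ V)

section Probability
variable {X : Type*} [TopologicalSpace X]

/-- The push-forward `k ↦ ν(k ∘ T)` of a state along a continuous map `T`. -/
def pushforward {X' : Type*} [TopologicalSpace X'] (T : C(X, X'))
    (ν : WeakDual ℝ C(X, ℝ)) : WeakDual ℝ C(X', ℝ) :=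
  StrongDual.toWeakDual ((WeakDual.toStrongDual ν).comp
    ⟨(ContinuousMap.compRightAlgHom ℝ ℝ T).toLinearMap,
      ContinuousMap.compRightAlgHom_continuous ℝ ℝ T⟩)

theorem pushforward_apply {X' : Type*} [TopologicalSpace X'] (T : C(X, X'))
    (ν : WeakDual ℝ C(X, ℝ)) (k : C(X', ℝ)) : pushforward T ν k = ν (k.comp T) := rfl

variable [CompactSpace X]

variable (X) in
/-- The states of `C(X)`, which play the role of the probability measures on the compact
space `X`. -/
def probabilityStates : Set (WeakDual ℝ C(X, ℝ)) := stateSpace {k | 0 ≤ k} 1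

namespace probabilityStates

theorem isCompact : IsCompact (probabilityStates X) :=
  isCompact_stateSpace fun k x => by
    simpa using (le_abs_self _).trans (k.norm_coe_le_norm x)

theorem mono {ν : WeakDual ℝ C(X, ℝ)} (hν : ν ∈ probabilityStates X) {a b : C(X, ℝ)}
    (h : a ≤ b) : ν a ≤ ν b := by
  have := hν.2 (b - a) (sub_nonneg.2 h)
  rwa [map_sub, sub_nonneg] at this

theorem map_const {ν : WeakDual ℝ C(X, ℝ)} (hν : ν ∈ probabilityStates X) (c : ℝ) :
    ν (algebraMap ℝ _ c) = c := by
  rw [Algebra.algebraMap_eq_smul_one, map_smul, hν.1, smul_eq_mul, mul_one]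

/-- The normalised density: the state `k ↦ ν(p k) / ν(p)`. -/
def withDensity (ν : WeakDual ℝ C(X, ℝ)) (p : C(X, ℝ)) : WeakDual ℝ C(X, ℝ) :=
  (ν p)⁻¹ • (StrongDual.toWeakDual
    ((WeakDual.toStrongDual ν).comp (ContinuousLinearMap.mul ℝ C(X, ℝ) p)))

theorem withDensity_apply (ν : WeakDual ℝ C(X, ℝ)) (p k : C(X, ℝ)) :
    withDensity ν p k = (ν p)⁻¹ * ν (p * k) := rfl

theorem withDensity_mem {ν : WeakDual ℝ C(X, ℝ)} (hν : ν ∈ probabilityStates X)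
    {p : C(X, ℝ)} (hp : 0 ≤ p) (hνp : 0 < ν p) : withDensity ν p ∈ probabilityStates X := by
  refine ⟨?_, fun k hk => ?_⟩
  · rw [withDensity_apply, mul_one, inv_mul_cancel₀ hνp.ne']
  · exact mul_nonneg (inv_nonneg.2 hνp.le) (hν.2 _ (mul_nonneg hp hk))

theorem pushforward_mem {X' : Type*} [TopologicalSpace X'] [CompactSpace X'] (T : C(X, X'))
    {ν : WeakDual ℝ C(X, ℝ)} (hν : ν ∈ probabilityStates X) :
    pushforward T ν ∈ probabilityStates X' :=
  ⟨hν.1, fun _ hk => hν.2 _ fun x => hk (T x)⟩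

end probabilityStates

section Barycenter
variable {E : Type*} [AddCommGroup E] [Module ℝ E] [TopologicalSpace E]

/-- `b` is the barycenter of the state `ν` of `C(X)`, where `X` is mapped to the topological
vector space `E` by `i`: every continuous linear functional on `E` has mean value `f b`. -/
def IsBarycenter (i : C(X, E)) (ν : WeakDual ℝ C(X, ℝ)) (b : E) : Prop :=
  ∀ f : StrongDual ℝ E, ν ((f : C(E, ℝ)).comp i) = f b

variable {i : C(X, E)} {K : Set E} {ν : WeakDual ℝ C(X, ℝ)}

/-- Finitely many functionals map `K` to a compact convex set in `ℝⁿ`; a hyperplane separating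
it from the point of `ν`-means would contradict the positivity of `ν`. -/
theorem exists_mem_forall_finset_eq (hK : IsCompact K) (hKconv : Convex ℝ K)
    (hi : ∀ x, i x ∈ K) (hν : ν ∈ probabilityStates X) (s : Finset (StrongDual ℝ E)) :
    ∃ b ∈ K, ∀ f ∈ s, ν ((f : C(E, ℝ)).comp i) = f b := by
  classical
  let r : E →L[ℝ] (s → ℝ) := ContinuousLinearMap.pi Subtype.val
  let c : s → ℝ := fun f => ν ((f.1 : C(E, ℝ)).comp i)
  suffices hc : c ∈ r '' K by
    obtain ⟨b, hb, hbc⟩ := hc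
    exact ⟨b, hb, fun f hf => (congrFun hbc ⟨f, hf⟩).symm⟩
  by_contra hc
  obtain ⟨l, u, hlK, hlc⟩ := geometric_hahn_banach_closed_point
    (hKconv.linear_image r.toLinearMap) (hK.image r.continuous).isClosed hc
  have hl (v : s → ℝ) : l v = ∑ f, v f * l fun g => if f = g then 1 else 0 :=
    LinearMap.pi_apply_eq_sum_univ l.toLinearMap v
  have hcomp : ((l.comp r : StrongDual ℝ E) : C(E, ℝ)).comp i =
      ∑ f : s, (l fun g => if f = g then 1 else 0) • (f.1 : C(E, ℝ)).comp i := by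
    ext x
    rw [ContinuousMap.sum_apply]
    exact (hl (r (i x))).trans (Finset.sum_congr rfl fun f _ => mul_comm _ _)
  have hmean : ν (((l.comp r : StrongDual ℝ E) : C(E, ℝ)).comp i) = l c := by
    rw [hcomp, map_sum, hl c]
    exact Finset.sum_congr rfl fun f _ => (map_smul ν _ _).trans (mul_comm _ _)
  have hle : ν (((l.comp r : StrongDual ℝ E) : C(E, ℝ)).comp i) ≤ u := by
    rw [← probabilityStates.map_const hν u]
    exact probabilityStates.mono hν fun x => (hlK _ ⟨i x, hi x, rfl⟩).le
  linarith

theorem exists_isBarycenter (hK : IsCompact K) (hKconv : Convex ℝ K) (hi : ∀ x, i x ∈ K)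
    (hν : ν ∈ probabilityStates X) : ∃ b ∈ K, IsBarycenter i ν b := by
  obtain ⟨b, hbK, hb⟩ := hK.inter_iInter_nonempty
    (fun f : StrongDual ℝ E => {b | ν ((f : C(E, ℝ)).comp i) = f b})
    (fun f => isClosed_eq continuous_const f.continuous) fun s => by
      obtain ⟨b, hbK, hb⟩ := exists_mem_forall_finset_eq hK hKconv hi hν s
      exact ⟨b, hbK, mem_iInter₂.2 hb⟩
  exact ⟨b, hbK, mem_iInter.1 hb⟩

variable [T2Space E] [IsTopologicalAddGroup E] [ContinuousSMul ℝ E] [LocallyConvexSpace ℝ E]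

/-- The barycenter of `ν` is a convex combination of the barycenters of the states with
densities `p / ν(p)` and `(1 - p) / ν(1 - p)`, so at an extreme point both must coincide with
it. -/
theorem IsBarycenter.map_mul_of_mem_Ioo
    (hK : IsCompact K) (hKconv : Convex ℝ K) (hi : ∀ x, i x ∈ K)
    (hν : ν ∈ probabilityStates X) {b : E} (hb : b ∈ extremePoints ℝ K) (hνb : IsBarycenter i ν b)
    {p : C(X, ℝ)} (hp : 0 ≤ p) (hp' : p ≤ 1) (hνp : ν p ∈ Ioo 0 1) (f : StrongDual ℝ E) :
    ν (p * (f : C(E, ℝ)).comp i) = ν p * f b := by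
  have hν1p : ν (1 - p) = 1 - ν p := by rw [map_sub, hν.1]
  have hνp' : 0 < ν (1 - p) := by rw [hν1p]; linarith [hνp.2]
  obtain ⟨b₁, hb₁, h₁⟩ := exists_isBarycenter hK hKconv hi
    (probabilityStates.withDensity_mem hν hp hνp.1)
  obtain ⟨b₂, hb₂, h₂⟩ := exists_isBarycenter hK hKconv hi
    (probabilityStates.withDensity_mem hν (sub_nonneg.2 hp') hνp')
  have hcomb : ν p • b₁ + ν (1 - p) • b₂ = b := by
    refine SeparatingDual.eq_iff_forall_dual_eq.2 fun (f : StrongDual ℝ E) => ?_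
    rw [map_add, map_smul, map_smul, smul_eq_mul, smul_eq_mul, ← h₁ f, ← h₂ f, ← hνb f,
      probabilityStates.withDensity_apply, probabilityStates.withDensity_apply,
      mul_inv_cancel_left₀ hνp.1.ne', mul_inv_cancel_left₀ hνp'.ne', ← map_add, ← add_mul,
      add_sub_cancel, one_mul]
  have hb₁b : b₁ = b := hb.2 hb₁ hb₂ ⟨ν p, ν (1 - p), hνp.1, hνp', by rw [hν1p]; ring, hcomb⟩
  rw [← hb₁b, ← h₁ f, probabilityStates.withDensity_apply, mul_inv_cancel_left₀ hνp.1.ne']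

theorem IsBarycenter.map_mul
    (hK : IsCompact K) (hKconv : Convex ℝ K) (hi : ∀ x, i x ∈ K)
    (hν : ν ∈ probabilityStates X) {b : E} (hb : b ∈ extremePoints ℝ K) (hνb : IsBarycenter i ν b)
    (p : C(X, ℝ)) (f : StrongDual ℝ E) : ν (p * (f : C(E, ℝ)).comp i) = ν p * f b := by
  let c : ℝ := (4 * (‖p‖ + 1))⁻¹
  have hc : 0 < c := by positivity
  have hcp (x : X) : |c * p x| ≤ 1 / 4 := by
    rw [abs_mul, abs_of_pos hc, inv_mul_le_iff₀ (by positivity)]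
    linarith [p.norm_coe_le_norm x, Real.norm_eq_abs (p x)]
  let q : C(X, ℝ) := algebraMap ℝ _ (1 / 2) + c • p
  have hq (x : X) : q x ∈ Icc (1 / 4) (3 / 4) := by
    have := abs_le.1 (hcp x)
    change 1 / 2 + c * p x ∈ _
    constructor <;> linarith
  have hνq : ν q ∈ Icc (1 / 4) (3 / 4) := by
    rw [← probabilityStates.map_const hν (1 / 4), ← probabilityStates.map_const hν (3 / 4)]
    exact ⟨probabilityStates.mono hν fun x => (hq x).1,
      probabilityStates.mono hν fun x => (hq x).2⟩
  have key := hνb.map_mul_of_mem_Ioo hK hKconv hi hν hb (p := q)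
    (fun x => le_trans (by simp) (hq x).1) (fun x => (hq x).2.trans (by simp; norm_num))
    ⟨by linarith [hνq.1], by linarith [hνq.2]⟩ f
  rw [add_mul, ← Algebra.smul_def, smul_mul_assoc, map_add,
    map_smul, map_smul, hνb f, map_add, map_smul, probabilityStates.map_const hν] at key
  simp only [smul_eq_mul] at key
  exact mul_left_cancel₀ hc.ne' (by linarith)

/-- Bauer: the only representing probability measure of an extreme point is its Dirac measure.
The functions `q` with `ν(p q) = ν(p) q(w)` for all `p` form a closed subalgebra of `C(X)`. -/
theorem IsBarycenter.eq_apply_of_mem_extremePoints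
    (hK : IsCompact K) (hKconv : Convex ℝ K)
    (hi : ∀ x, i x ∈ K) (hinj : Function.Injective i) (hν : ν ∈ probabilityStates X) {w : X}
    (hw : i w ∈ extremePoints ℝ K) (hνw : IsBarycenter i ν (i w)) (q : C(X, ℝ)) : ν q = q w := by
  let A : Subalgebra ℝ C(X, ℝ) :=
    { carrier := {q | ∀ p, ν (p * q) = ν p * q w}
      mul_mem' := fun {q r} hq hr p => by
        rw [← mul_assoc, hr, hq, mul_assoc, ContinuousMap.mul_apply]
      add_mem' := fun {q r} hq hr p => by
        rw [mul_add, map_add, hq, hr, ContinuousMap.add_apply, mul_add]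
      algebraMap_mem' := fun c p => by
        rw [mul_comm, Algebra.algebraMap_eq_smul_one, smul_mul_assoc, one_mul, map_smul, mul_comm]
        simp }
  have hA : IsClosed (A : Set C(X, ℝ)) := by
    rw [show (A : Set C(X, ℝ)) = ⋂ p, {q | ν (p * q) = ν p * q w} from ofPred_forall _]
    refine isClosed_iInter fun p => isClosed_eq ?_ ?_
    · exact (WeakDual.toStrongDual ν).continuous.comp (continuous_const.mul continuous_id)
    · exact continuous_const.mul (continuous_eval_const w)
  have hsep : A.SeparatesPoints := fun x y hxy => by
    obtain ⟨f, hf⟩ := SeparatingDual.exists_separating_of_ne (R := ℝ) (hinj.ne hxy)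
    exact ⟨_, ⟨(f : C(E, ℝ)).comp i, fun p => hνw.map_mul hK hKconv hi hν hw p f, rfl⟩, hf⟩
  have htop := ContinuousMap.subalgebra_topologicalClosure_eq_top_of_separatesPoints A hsep
  have hq : q ∈ A := by
    rw [← SetLike.mem_coe, ← hA.closure_eq, ← A.topologicalClosure_coe, htop]
    trivial
  simpa [hν.1] using hq 1

end Barycenter
end Probability

section AffineFlow
variable {E : Type*} [AddCommGroup E] [Module ℝ E] [TopologicalSpace E]
  [DistribMulAction G E] {K : Set E}

variable (G) in
/-- An affine `G`-flow: a nonempty compact convex `G`-invariant subset of a topological vector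
space on which `G` acts by linear maps. -/
structure IsAffineFlow (K : Set E) : Prop where
  nonempty : K.Nonempty
  isCompact : IsCompact K
  convex : Convex ℝ K
  smul_mem : ∀ (g : G), ∀ b ∈ K, g • b ∈ K

theorem IsAffineFlow.smul_mem_extremePoints [SMulCommClass G ℝ E] (hK : IsAffineFlow G K) (g : G)
    {b : E}
    (hb : b ∈ extremePoints ℝ K) : g • b ∈ extremePoints ℝ K := by
  refine ⟨hK.smul_mem g b hb.1, ?_⟩
  rintro x hx y hy ⟨s, t, hs, ht, hst, hxy⟩
  have := hb.2 (hK.smul_mem g⁻¹ x hx) (hK.smul_mem g⁻¹ y hy) ⟨s, t, hs, ht, hst, by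
    rw [← smul_comm g⁻¹ s, ← smul_comm g⁻¹ t, ← smul_add, hxy, inv_smul_smul]⟩
  rw [← this, smul_inv_smul]

variable [T2Space E]

theorem IsAffineFlow.exists_minimal (hK : IsAffineFlow G K) :
    ∃ K₀ ⊆ K, Minimal (IsAffineFlow G) K₀ := by
  refine zorn_superset_nonempty {K : Set E | IsAffineFlow G K} (fun c hc hchain hne => ?_) K hK
  obtain ⟨s, hs⟩ := id hne
  have := hne.to_subtype
  refine ⟨⋂₀ c, ⟨?_, ?_, ?_, ?_⟩, fun s hs => sInter_subset_of_mem hs⟩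
  · exact IsCompact.nonempty_sInter_of_directed_nonempty_isCompact_isClosed
      (show IsChain (· ⊇ ·) c from hchain.symm).directedOn
      (fun s hs => (hc hs).nonempty) (fun s hs => (hc hs).isCompact)
      fun s hs => (hc hs).isCompact.isClosed
  · exact (hc hs).isCompact.of_isClosed_subset
      (isClosed_sInter fun s hs => (hc hs).isCompact.isClosed) (sInter_subset_of_mem hs)
  · exact convex_sInter fun s hs => (hc hs).convex
  · exact fun g b hb s hs => (hc hs).smul_mem g b (hb s hs)

variable [SMulCommClass G ℝ E] [ContinuousConstSMul G E]

/-- The closure of the extreme points of an affine flow, as a `G`-space. -/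
def IsAffineFlow.closureExtremePoints (hK : IsAffineFlow G K) : SubMulAction G E where
  carrier := closure (extremePoints ℝ K)
  smul_mem' g _ hx :=
    map_mem_closure (continuous_const_smul g) hx fun _ => hK.smul_mem_extremePoints g

theorem IsAffineFlow.closureExtremePoints_subset (hK : IsAffineFlow G K) :
    (hK.closureExtremePoints : Set E) ⊆ K :=
  closure_minimal extremePoints_subset hK.isCompact.isClosed

instance (hK : IsAffineFlow G K) : CompactSpace hK.closureExtremePoints :=
  isCompact_iff_compactSpace.1
    (hK.isCompact.of_isClosed_subset isClosed_closure hK.closureExtremePoints_subset)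

instance (hK : IsAffineFlow G K) : ContinuousConstSMul G hK.closureExtremePoints where
  continuous_const_smul g := by
    exact ((continuous_const_smul g).comp continuous_subtype_val).subtype_mk _

end AffineFlow

section Boundary
variable (G) (X : Type*) [TopologicalSpace X] [MulAction G X] [ContinuousConstSMul G X]

variable {G} in
/-- The self-map `x ↦ g x` of a `G`-space. -/
def smulMap (g : G) : C(X, X) := ⟨(g • ·), continuous_const_smul g⟩

theorem smulMap_one : smulMap X (1 : G) = ContinuousMap.id X :=
  ContinuousMap.ext fun x => one_smul G x

theorem smulMap_mul (g g' : G) : smulMap X (g * g') = (smulMap X g).comp (smulMap X g') :=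
  ContinuousMap.ext fun x => mul_smul g g' x

/-- `X` is a `G`-boundary: the orbit of every probability measure accumulates at every point
mass. By Urysohn's lemma it is enough to test this against one function at a time, and only
from below. -/
def IsBoundary [CompactSpace X] : Prop :=
  ∀ ν ∈ probabilityStates X, ∀ (h : C(X, ℝ)) (w : X) (δ : ℝ), 0 < δ →
    ∃ g : G, h w - δ < ν (h.comp (smulMap X g))

end Boundary

section Glasner
variable {E : Type*} [AddCommGroup E] [Module ℝ E] [TopologicalSpace E] [DistribMulAction G E]
  [SMulCommClass G ℝ E] [ContinuousConstSMul G E] {K : Set E}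
  {X : Type*} [TopologicalSpace X] [MulAction G X] [ContinuousConstSMul G X]
  {i : C(X, E)} {N : Set (WeakDual ℝ C(X, ℝ))}

open probabilityStates

theorem IsBarycenter.smul (hequiv : ∀ (g : G) x, i (g • x) = g • i x)
    {ν : WeakDual ℝ C(X, ℝ)} {b : E} (h : IsBarycenter i ν b) (g : G) :
    IsBarycenter i (pushforward (smulMap X g) ν) (g • b) := fun f => by
  let fg : StrongDual ℝ E := f.comp ⟨DistribSMul.toLinearMap ℝ E g, continuous_const_smul g⟩
  rw [pushforward_apply, ← show fg b = f (g • b) from rfl, ← h fg]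
  congr 1
  ext x
  exact congrArg f (hequiv g x)

theorem isCompact_sep_isBarycenter [T2Space E] (hK : IsCompact K) (hN : IsCompact N) :
    IsCompact {b ∈ K | ∃ ν ∈ N, IsBarycenter i ν b} := by
  have hclosed : IsClosed {p : E × WeakDual ℝ C(X, ℝ) | IsBarycenter i p.2 p.1} := by
    simp only [IsBarycenter, ofPred_forall]
    exact isClosed_iInter fun f => isClosed_eq
      ((WeakDual.eval_continuous _).comp continuous_snd) (f.continuous.comp continuous_fst)
  convert ((hK.prod hN).inter_right hclosed).image continuous_fst using 1
  ext b
  simp [and_assoc]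

theorem convex_sep_isBarycenter (hK : Convex ℝ K) (hN : Convex ℝ N) :
    Convex ℝ {b ∈ K | ∃ ν ∈ N, IsBarycenter i ν b} := by
  rintro b₁ ⟨hb₁, ν₁, hν₁, h₁⟩ b₂ ⟨hb₂, ν₂, hν₂, h₂⟩ s t hs ht hst
  refine ⟨hK hb₁ hb₂ hs ht hst, _, hN hν₁ hν₂ hs ht hst, fun f => ?_⟩
  rw [map_add, map_smul, map_smul, ← h₁ f, ← h₂ f]
  rfl

theorem exists_isBarycenter_of_minimal [CompactSpace X] [T2Space E]
    (hK : Minimal (IsAffineFlow G) K)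
    (hi : ∀ x, i x ∈ K) (hequiv : ∀ (g : G) x, i (g • x) = g • i x)
    (hN : N ⊆ probabilityStates X) (hNne : N.Nonempty) (hNcl : IsClosed N) (hNconv : Convex ℝ N)
    (hNsmul : ∀ g : G, ∀ ν ∈ N, pushforward (smulMap X g) ν ∈ N) {b : E} (hb : b ∈ K) :
    ∃ ν ∈ N, IsBarycenter i ν b := by
  have hflow : IsAffineFlow G {b ∈ K | ∃ ν ∈ N, IsBarycenter i ν b} :=
    { nonempty := by
        obtain ⟨ν, hν⟩ := hNne
        obtain ⟨b, hb, hνb⟩ := exists_isBarycenter hK.prop.isCompact hK.prop.convex hi (hN hν)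
        exact ⟨b, hb, ν, hν, hνb⟩
      isCompact := isCompact_sep_isBarycenter hK.prop.isCompact
        (probabilityStates.isCompact.of_isClosed_subset hNcl hN)
      convex := convex_sep_isBarycenter hK.prop.convex hNconv
      smul_mem := fun g b ⟨hb, ν, hν, hνb⟩ =>
        ⟨hK.prop.smul_mem g b hb, _, hNsmul g ν hν, hνb.smul hequiv g⟩ }
  exact (hK.le_of_le hflow (sep_subset _ _) hb).2

/-- Otherwise the states whose orbit has `h`-mean at most `h w - δ` would represent every point
of the minimal flow, including an extreme point close to `w`, against Bauer's theorem. -/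
theorem isBoundary_closureExtremePoints [T2Space E] [IsTopologicalAddGroup E]
    [ContinuousSMul ℝ E] [LocallyConvexSpace ℝ E] (hK : Minimal (IsAffineFlow G) K) :
    IsBoundary G hK.prop.closureExtremePoints := by
  set X := hK.prop.closureExtremePoints
  intro ν hν h w δ hδ
  by_contra! hνle
  let i : C(X, E) := ⟨Subtype.val, continuous_subtype_val⟩
  have hi (x : X) : i x ∈ K := hK.prop.closureExtremePoints_subset x.2
  obtain ⟨e, he, hwe⟩ : ∃ e : X, i e ∈ extremePoints ℝ K ∧ h w - δ < h e := by
    obtain ⟨o, ho, hoe⟩ := isOpen_induced_iff.1 (isOpen_lt continuous_const h.continuous :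
      IsOpen {x | h w - δ < h x})
    have hwo : w ∈ Subtype.val ⁻¹' o := hoe ▸ (sub_lt_self _ hδ :)
    obtain ⟨e, heo, he⟩ := mem_closure_iff.1 w.2 o ho hwo
    exact ⟨⟨e, subset_closure he⟩, he, (hoe ▸ heo : _ ∈ {x | h w - δ < h x})⟩
  let L (g : G) : Set (WeakDual ℝ C(X, ℝ)) := {ν' | ν' (h.comp (smulMap X g)) ≤ h w - δ}
  have hL (g : G) : Convex ℝ (L g) :=
    convex_halfSpace_le ⟨fun _ _ => rfl, fun _ _ => rfl⟩ _
  obtain ⟨ν', hν', hν'e⟩ := exists_isBarycenter_of_minimal hK (i := i) hi (fun _ _ => rfl)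
    (N := probabilityStates X ∩ ⋂ g, L g) inter_subset_left ⟨ν, hν, mem_iInter.2 hνle⟩
    (isClosed_stateSpace.inter (isClosed_iInter fun g =>
      isClosed_le (WeakDual.eval_continuous _) continuous_const))
    (convex_stateSpace.inter (convex_iInter hL))
    (fun g ν' hν' => ⟨pushforward_mem _ hν'.1, mem_iInter.2 fun g' => by
      have := mem_iInter.1 hν'.2 (g' * g)
      simpa only [L, mem_ofPred_eq, pushforward_apply, ContinuousMap.comp_assoc, smulMap_mul]
        using this⟩) (hi e)
  have := mem_iInter.1 hν'.2 1
  rw [mem_ofPred_eq, smulMap_one, ContinuousMap.comp_id, hν'e.eq_apply_of_mem_extremePoints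
    hK.prop.isCompact hK.prop.convex hi Subtype.val_injective hν'.1 he] at this
  exact this.not_gt hwe

end Glasner

section Means

theorem translInfty_apply {H : Type*} [Group H] (h : H) (f : lp (fun _ : H => ℝ) ∞) (k : H) :
    translInfty h f k = f (h⁻¹ * k) := rfl

/-- Composition with a map of index sets, as a continuous linear map of `ℓ^∞` spaces. -/
def compInfty {S T : Type*} (r : S → T) : lp (fun _ : T => ℝ) ∞ →L[ℝ] lp (fun _ : S => ℝ) ∞ :=
  LinearMap.mkContinuous
    { toFun := fun f => ⟨fun s => f (r s), memℓp_infty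
        ⟨‖f‖, forall_mem_range.2 fun s => lp.norm_apply_le_norm ENNReal.top_ne_zero f (r s)⟩⟩
      map_add' := fun _ _ => rfl
      map_smul' := fun _ _ => rfl } 1 fun f =>
    (lp.norm_le_of_forall_le (by positivity) fun s =>
      (lp.norm_apply_le_norm ENNReal.top_ne_zero f (r s)).trans (one_mul _).ge)

theorem compInfty_apply {S T : Type*} (r : S → T) (f : lp (fun _ : T => ℝ) ∞) (s : S) :
    compInfty r f s = f (r s) := rfl

variable (G) in
/-- The means on `G`. -/
def means : Set (WeakDual ℝ (lp (fun _ : G => ℝ) ∞)) := stateSpace {f | ∀ k, 0 ≤ f k} 1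

instance : DistribMulAction G (WeakDual ℝ (lp (fun _ : G => ℝ) ∞)) where
  smul g m := StrongDual.toWeakDual ((WeakDual.toStrongDual m).comp (compInfty (g * ·)))
  one_smul m := DFunLike.ext _ _ fun f => congrArg m (by ext k; simp [compInfty_apply])
  mul_smul g h m := DFunLike.ext _ _ fun f => congrArg m (by
    ext k; simp [compInfty_apply, mul_assoc])
  smul_zero _ := rfl
  smul_add _ _ _ := rfl

theorem smul_mean_apply (g : G) (m : WeakDual ℝ (lp (fun _ : G => ℝ) ∞))
    (f : lp (fun _ : G => ℝ) ∞) : (g • m) f = m (translInfty g⁻¹ f) := by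
  rw [show translInfty g⁻¹ f = compInfty (g * ·) f by
    ext k; simp [translInfty_apply, compInfty_apply]]
  rfl

instance : SMulCommClass G ℝ (WeakDual ℝ (lp (fun _ : G => ℝ) ∞)) := ⟨fun _ _ _ => rfl⟩

instance : ContinuousConstSMul G (WeakDual ℝ (lp (fun _ : G => ℝ) ∞)) :=
  ⟨fun _ => WeakDual.continuous_of_continuous_eval fun _ => WeakDual.eval_continuous _⟩

variable (G) in
theorem isAffineFlow_means : IsAffineFlow G (means G) where
  nonempty := ⟨StrongDual.toWeakDual (lp.evalCLM ℝ (fun _ : G => ℝ) ∞ 1), rfl, fun _ hf => hf 1⟩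
  isCompact := isCompact_stateSpace fun f k => by
    have := (le_abs_self _).trans (lp.norm_apply_le_norm ENNReal.top_ne_zero f k)
    rw [lp.coeFn_sub, lp.coeFn_smul, Pi.sub_apply, Pi.smul_apply, lp.infty_coeFn_one,
      Pi.one_apply, smul_eq_mul, mul_one]
    exact sub_nonneg.2 this
  convex := convex_stateSpace
  smul_mem g _ hm := ⟨hm.1, fun _ hf => hm.2 _ fun k => hf (g * k)⟩

/-- A left `H`-equivariant map `G → H` pulls bounded functions on `H` back to `G`, hence pushes
`H`-invariant means forward to `H`. -/
theorem isAmenable_of_fixed_mean (H : Subgroup G) {m : WeakDual ℝ (lp (fun _ : G => ℝ) ∞)}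
    (hm : m ∈ means G) (hH : ∀ h ∈ H, h • m = m) : IsAmenable H := by
  obtain ⟨T, hT, -⟩ := H.exists_isComplement_right 1
  let r (g : G) : H := (hT.equiv g).1
  have hr (h : H) (g : G) : r (h * g) = h * r g := congrArg Prod.fst (hT.equiv_mul_left h g)
  refine ⟨(m : _ →L[ℝ] ℝ).toLinearMap ∘ₗ (compInfty r).toLinearMap, hm.1,
    fun f hf => hm.2 _ fun k => hf (r k), fun h f => ?_⟩
  have htransl : compInfty r (translInfty h f) = translInfty (h : G) (compInfty r f) := by
    ext g
    rw [compInfty_apply, translInfty_apply, translInfty_apply, compInfty_apply, ← hr]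
    rfl
  calc m (compInfty r (translInfty h f)) = m (translInfty (h : G) (compInfty r f)) := by
        rw [htransl]
    _ = ((h⁻¹ : G) • m) (compInfty r f) := by rw [smul_mean_apply, inv_inv]
    _ = m (compInfty r f) := by rw [hH _ (H.inv_mem h.2)]

variable (G) in
theorem exists_isBoundary : ∃ (X : Type u) (_ : TopologicalSpace X) (_ : CompactSpace X)
    (_ : T2Space X) (_ : Nonempty X) (_ : MulAction G X) (_ : ContinuousConstSMul G X),
    IsBoundary G X ∧
      ∀ (x : X) (H : Subgroup G), H ≤ MulAction.stabilizer G x → IsAmenable H := by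
  obtain ⟨K, hKsub, hK⟩ := (isAffineFlow_means G).exists_minimal
  obtain ⟨e, he⟩ := hK.prop.isCompact.extremePoints_nonempty hK.prop.nonempty
  refine ⟨hK.prop.closureExtremePoints, inferInstance, inferInstance, inferInstance,
    ⟨e, subset_closure he⟩, inferInstance, inferInstance,
    isBoundary_closureExtremePoints hK, fun x H hH => ?_⟩
  exact isAmenable_of_fixed_mean H (hKsub (hK.prop.closureExtremePoints_subset x.2))
    fun h hh => congrArg Subtype.val (hH hh : h • x = x)

end Means

section Conjugation

theorem mem_conjSub {g t : G} {H : Subgroup G} : t ∈ conjSub g H ↔ g⁻¹ * t * g ∈ H := by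
  exact Subgroup.mem_map_equiv.trans (by rw [MulAut.conj_symm_apply])

theorem conjSub_stabilizer {X : Type*} [MulAction G X] (g : G) (x : X) :
    conjSub g (MulAction.stabilizer G x) = MulAction.stabilizer G (g • x) :=
  (MulAction.stabilizer_smul_eq_stabilizer_map_conj g x).symm

end Conjugation

section Chabauty

theorem mem_closure_chabauty_iff {𝒮 : Set (Subgroup G)} {K : Subgroup G} :
    K ∈ closure 𝒮 ↔ ∀ F : Finset G, ∃ L ∈ 𝒮, ∀ t ∈ F, (t ∈ L ↔ t ∈ K) := by
  classical
  have basis (v : G → Bool) : (𝓝 v).HasBasis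
      (fun I : Set G × (G → Unit) => I.1.Finite ∧ ∀ t ∈ I.1, True)
      fun I => I.1.pi fun t => {v t} := by
    rw [nhds_pi]
    simp only [nhds_discrete]
    exact Filter.hasBasis_pi fun t => Filter.hasBasis_pure (v t)
  refine (@closure_induced (Subgroup G) (G → Bool) _
    (fun H g => @decide (g ∈ H) (Classical.propDecidable _)) K 𝒮).trans ?_
  rw [mem_closure_iff_nhds_basis (basis _)]
  simp only [exists_mem_image, mem_pi, mem_singleton_iff, decide_eq_decide]
  refine ⟨fun h F => ?_, fun h i hi => ?_⟩
  · exact h ⟨F, fun _ => ()⟩ ⟨F.finite_toSet, fun _ _ => trivial⟩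
  · obtain ⟨L, hL, hLK⟩ := h hi.1.toFinset
    exact ⟨L, hL, fun t ht => hLK t (hi.1.mem_toFinset.2 ht)⟩

theorem isRecurrent_iff {H : Subgroup G} :
    IsRecurrent H ↔ ∃ F : Finset G, 1 ∉ F ∧ ∀ g, ∃ t ∈ F, t ∈ conjSub g H := by
  classical
  rw [IsRecurrent, mem_closure_chabauty_iff]
  push Not
  refine ⟨fun ⟨F, hF⟩ => ⟨F.erase 1, F.notMem_erase 1, fun g => ?_⟩,
    fun ⟨F, h₁, hF⟩ => ⟨F, ?_⟩⟩
  · obtain ⟨t, ht, hne⟩ := hF _ ⟨g, rfl⟩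
    have ht₁ : t ≠ 1 := by rintro rfl; simp [one_mem] at hne
    refine ⟨t, Finset.mem_erase.2 ⟨ht₁, ht⟩, ?_⟩
    simpa [Subgroup.mem_bot, ht₁] using hne
  · rintro _ ⟨g, rfl⟩
    obtain ⟨t, ht, htg⟩ := hF g
    refine ⟨t, ht, Or.inl ⟨htg, ?_⟩⟩
    rintro rfl
    exact h₁ ht

variable {X : Type*} [MulAction G X]

theorem isRecurrent_stabilizer {F : Finset G} (h₁ : 1 ∉ F) (hF : ∀ x : X, ∃ t ∈ F, t • x = x)
    (x : X) : IsRecurrent (MulAction.stabilizer G x) :=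
  isRecurrent_iff.2 ⟨F, h₁, fun g => by
    simpa only [conjSub_stabilizer, MulAction.mem_stabilizer_iff] using hF (g • x)⟩

theorem isNormalish_stabilizer
    (hfix : ∀ s : Set X, s.Finite → (fixingSubgroup G s : Set G).Infinite) (x : X) :
    IsNormalish (MulAction.stabilizer G x) := by
  intro n g
  convert hfix (range fun i => g i • x) (finite_range _)
  ext t
  simp [conjSub_stabilizer, mem_fixingSubgroup_iff]

end Chabauty

section Dynamics

variable {X : Type*} [TopologicalSpace X]

section Separation

variable [T2Space X]

theorem exists_bump [CompactSpace X] {w : X} {U : Set X} (hU : U ∈ 𝓝 w) :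
    ∃ h : C(X, ℝ), h w = 1 ∧ 0 ≤ h ∧ h ≤ 1 ∧ ∀ x ∉ U, h x = 0 := by
  obtain ⟨h, h₀, h₁, h₂⟩ := exists_continuous_zero_one_of_isClosed (s := (interior U)ᶜ) (t := {w})
    isOpen_interior.isClosed_compl isClosed_singleton
    (by simpa using mem_interior_iff_mem_nhds.2 hU)
  exact ⟨h, h₁ rfl, fun x => (h₂ x).1, fun x => (h₂ x).2,
    fun x hx => h₀ fun hx' => hx (interior_subset hx')⟩

variable [MulAction G X] [ContinuousConstSMul G X]

theorem exists_nhds_forall_smul_notMem {F : Finset G} {w : X} (hF : ∀ t ∈ F, t • w ≠ w) :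
    ∃ U ∈ 𝓝 w, ∀ t ∈ F, ∀ x ∈ U, t • x ∉ U := by
  have single : ∀ t ∈ F, ∃ U ∈ 𝓝 w, ∀ x ∈ U, t • x ∉ U := by
    intro t ht
    obtain ⟨A, hA, B, hB, hAB⟩ := Filter.disjoint_iff.1 (disjoint_nhds_nhds.2 (hF t ht))
    exact ⟨B ∩ (t • ·) ⁻¹' A, Filter.inter_mem hB ((continuous_const_smul t).continuousAt hA),
      fun x hx hx' => hAB.notMem_of_mem_left hx.2 hx'.1⟩
  choose! U hU hUt using single
  refine ⟨⋂ t ∈ F, U t, (Filter.biInter_finset_mem F).2 hU, fun t ht x hx hx' => ?_⟩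
  exact hUt t ht x (mem_iInter₂.1 hx t ht) (mem_iInter₂.1 hx' t ht)

end Separation

variable [MulAction G X]

variable (G) in
/-- The subgroup of elements acting trivially on some neighbourhood of `x`. -/
def germStabilizer (x : X) : Subgroup G where
  carrier := {t | ∀ᶠ y in 𝓝 x, t • y = y}
  one_mem' := by simp
  mul_mem' {a b} ha hb := by
    filter_upwards [ha, hb] with y hay hby
    rw [mul_smul, hby, hay]
  inv_mem' {a} ha := by
    filter_upwards [ha] with y hay
    rw [inv_smul_eq_iff, hay]

theorem mem_germStabilizer {x : X} {t : G} :
    t ∈ germStabilizer G x ↔ ∀ᶠ y in 𝓝 x, t • y = y := Iff.rfl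

theorem germStabilizer_le_stabilizer (x : X) : germStabilizer G x ≤ MulAction.stabilizer G x :=
  fun _ ht => (mem_germStabilizer.1 ht).self_of_nhds

theorem eventually_subset_germStabilizer {x : X} {A : Set G} (hA : A.Finite)
    (hAx : A ⊆ germStabilizer G x) : ∀ᶠ y in 𝓝 x, A ⊆ germStabilizer G y :=
  (Filter.eventually_all_finite hA).2 fun _ ht => eventually_eventually_nhds.2 (hAx ht)

variable [ContinuousConstSMul G X]

theorem conjSub_germStabilizer (g : G) (x : X) :
    conjSub g (germStabilizer G x) = germStabilizer G (g • x) := by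
  ext t
  rw [mem_conjSub, mem_germStabilizer, mem_germStabilizer, ← Homeomorph.smul_apply g x,
    ← (Homeomorph.smul g).map_nhds_eq, Filter.eventually_map]
  simp only [Homeomorph.smul_apply, mul_smul, inv_smul_eq_iff]

theorem exists_mem_germStabilizer [CompactSpace X] [T2Space X] [Nonempty X] {F : Finset G}
    (hF : ∀ x : X, ∃ t ∈ F, t • x = x) : ∃ t ∈ F, ∃ x : X, t ∈ germStabilizer G x := by
  obtain ⟨⟨t, ht⟩, x, hx⟩ := nonempty_interior_of_iUnion_of_closed
    (f := fun t : F => {x : X | (t : G) • x = x})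
    (fun t => isClosed_eq (continuous_const_smul _) continuous_id)
    (iUnion_eq_univ_iff.2 fun x => let ⟨t, ht, hx⟩ := hF x; ⟨⟨t, ht⟩, hx⟩)
  exact ⟨t, ht, x, mem_interior_iff_mem_nhds.1 hx⟩

namespace IsBoundary

variable [CompactSpace X] [T2Space X]

-- If the barycentre of finitely many equal point masses is moved close enough to the point mass
-- at `w`, then every single one of them is.
theorem exists_forall_smul_mem (hX : IsBoundary G X) {s : Set X} (hs : s.Finite) {w : X}
    {U : Set X} (hU : U ∈ 𝓝 w) : ∃ g : G, ∀ x ∈ s, g • x ∈ U := by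
  classical
  lift s to Finset X using hs
  rcases s.eq_empty_or_nonempty with rfl | hs
  · exact ⟨1, by simp⟩
  obtain ⟨h, hw, -, h₁, hUh⟩ := exists_bump hU
  have card_pos : (0 : ℝ) < s.card := by exact_mod_cast hs.card_pos
  let dirac (x : X) : WeakDual ℝ C(X, ℝ) := StrongDual.toWeakDual (ContinuousMap.evalCLM ℝ x)
  have eval (k : C(X, ℝ)) :
      (∑ x ∈ s, (s.card : ℝ)⁻¹ • dirac x) k = (s.card : ℝ)⁻¹ * ∑ x ∈ s, k x := by
    rw [← Finset.smul_sum]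
    exact congrArg _ (map_sum ((topDualPairing ℝ C(X, ℝ)).flip k) dirac s)
  obtain ⟨g, hg⟩ := hX (∑ x ∈ s, (s.card : ℝ)⁻¹ • dirac x)
    (convex_stateSpace.sum_mem (fun _ _ => by positivity) (by simp [card_pos.ne'])
      fun x _ => ⟨rfl, fun k hk => hk x⟩) h w (s.card : ℝ)⁻¹ (by positivity)
  refine ⟨g, fun x hx => ?_⟩
  by_contra hxU
  have sum_le : ∑ y ∈ s, h (g • y) ≤ s.card - 1 := by
    rw [← Finset.add_sum_erase _ _ hx, hUh _ hxU, zero_add]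
    refine (Finset.sum_le_card_nsmul _ _ 1 fun y _ => h₁ (g • y)).trans_eq ?_
    rw [nsmul_one, Finset.card_erase_of_mem hx, Nat.cast_pred hs.card_pos]
  have lt_sum : 1 - (s.card : ℝ)⁻¹ < (s.card : ℝ)⁻¹ * ∑ y ∈ s, h (g • y) := by
    rw [hw, eval] at hg
    exact hg
  have := mul_le_mul_of_nonneg_left sum_le (inv_nonneg.2 card_pos.le)
  rw [mul_sub, inv_mul_cancel₀ card_pos.ne'] at this
  linarith

theorem ncard_le_ncard_fixingSubgroup (hX : IsBoundary G X) {s : Set X} (hs : s.Finite)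
    (hfix : (fixingSubgroup G s : Set G).Finite) {w : X} {A : Set G} (hA : A.Finite)
    (hAw : A ⊆ germStabilizer G w) : A.ncard ≤ (fixingSubgroup G s : Set G).ncard := by
  obtain ⟨g, hg⟩ := hX.exists_forall_smul_mem hs (eventually_subset_germStabilizer hA hAw)
  refine ncard_le_ncard_of_injOn (fun t => g⁻¹ * t * g) (fun t ht => ?_) (by simp [InjOn]) hfix
  refine (mem_fixingSubgroup_iff G).2 fun x hx => germStabilizer_le_stabilizer x ?_
  rw [← mem_conjSub, conjSub_germStabilizer]
  exact hg x hx ht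

theorem finite_germStabilizer (hX : IsBoundary G X) {s : Set X} (hs : s.Finite)
    (hfix : (fixingSubgroup G s : Set G).Finite) (w : X) :
    (germStabilizer G w : Set G).Finite := by
  by_contra hinf
  obtain ⟨A, hAw, hA⟩ := Set.Infinite.exists_subset_card_eq hinf
    ((fixingSubgroup G s : Set G).ncard + 1)
  have := hX.ncard_le_ncard_fixingSubgroup hs hfix A.finite_toSet hAw
  rw [ncard_coe_finset] at this
  omega

-- Move `x` and `y` simultaneously near a point whose germ stabilizer has maximal order.
theorem germStabilizer_eq (hX : IsBoundary G X) {s : Set X} (hs : s.Finite)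
    (hfix : (fixingSubgroup G s : Set G).Finite) (x y : X) :
    germStabilizer G x = germStabilizer G y := by
  have hfin := hX.finite_germStabilizer hs hfix
  obtain ⟨_, ⟨w, rfl⟩, hw⟩ := ((finite_Iic (fixingSubgroup G s : Set G).ncard).subset
    (range_subset_iff.2 fun w =>
      hX.ncard_le_ncard_fixingSubgroup hs hfix (hfin w) Subset.rfl)).exists_maximal
    ⟨_, mem_range_self x⟩
  obtain ⟨g, hg⟩ := hX.exists_forall_smul_mem (toFinite {x, y})
    (eventually_subset_germStabilizer (hfin w) Subset.rfl)
  have eq_max (z : X) (hz : z ∈ ({x, y} : Set X)) :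
      germStabilizer G w = conjSub g (germStabilizer G z) := by
    rw [conjSub_germStabilizer]
    refine SetLike.coe_injective (eq_of_subset_of_ncard_le (hg z hz) ?_ (hfin _))
    exact (le_total _ _).elim id fun h => hw (mem_range_self _) h
  have hconj := (eq_max x (by simp)).symm.trans (eq_max y (by simp))
  exact Subgroup.map_injective (MulAut.conj g).injective hconj

theorem normal_germStabilizer (hX : IsBoundary G X) {s : Set X} (hs : s.Finite)
    (hfix : (fixingSubgroup G s : Set G).Finite) (x : X) : (germStabilizer G x).Normal :=
  Subgroup.normal_iff_map_conj_eq.2 fun g =>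
    (conjSub_germStabilizer g x).trans (hX.germStabilizer_eq hs hfix _ _)

theorem exists_isAmenable_isRecurrent [Nonempty X] (hX : IsBoundary G X)
    (ham : ∀ (x : X) (H : Subgroup G), H ≤ MulAction.stabilizer G x → IsAmenable H)
    {F : Finset G} (h₁ : 1 ∉ F) (hF : ∀ x : X, ∃ t ∈ F, t • x = x) :
    ∃ H : Subgroup G, IsAmenable H ∧ IsRecurrent H ∧
      (((H : Set G).Finite ∧ H.Normal) ∨ IsNormalish H) := by
  by_cases hfix : ∀ s : Set X, s.Finite → (fixingSubgroup G s : Set G).Infinite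
  · obtain ⟨x⟩ := ‹Nonempty X›
    exact ⟨_, ham x _ le_rfl, isRecurrent_stabilizer h₁ hF x,
      Or.inr (isNormalish_stabilizer hfix x)⟩
  · push Not at hfix
    obtain ⟨s, hs, hfix⟩ := hfix
    obtain ⟨t, ht, x, htx⟩ := exists_mem_germStabilizer hF
    have hnormal := hX.normal_germStabilizer hs hfix x
    refine ⟨_, ham x _ (germStabilizer_le_stabilizer x), ?_,
      Or.inl ⟨hX.finite_germStabilizer hs hfix x, hnormal⟩⟩
    refine isRecurrent_iff.2 ⟨{t}, ?_, fun g => ⟨t, Finset.mem_singleton_self t, ?_⟩⟩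
    · rw [Finset.mem_singleton]
      exact (ne_of_mem_of_not_mem ht h₁).symm
    · rwa [conjSub_germStabilizer, hX.germStabilizer_eq hs hfix _ x]

end IsBoundary

end Dynamics

section States

open scoped InnerProductSpace

variable {A : Type*} [CStarAlgebra A]

/-- A state of a unital C⋆-algebra, encoded as a unital functional of norm at most one; positivity
is then automatic, see `IsState.apply_nonneg`. -/
structure IsState (ψ : StrongDual ℂ A) : Prop where
  norm_le : ‖ψ‖ ≤ 1
  map_one : ψ 1 = 1

namespace IsState

variable {ψ : StrongDual ℂ A}

theorem norm_apply_le (hψ : IsState ψ) (a : A) : ‖ψ a‖ ≤ ‖a‖ :=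
  (ψ.le_of_opNorm_le hψ.norm_le a).trans (one_mul _).le

theorem nontrivial (hψ : IsState ψ) : Nontrivial A :=
  ⟨1, 0, fun h => one_ne_zero (α := ℂ) (by rw [← hψ.map_one, h, map_zero])⟩

theorem re_apply_star_mul_self_le (hψ : IsState ψ) (a : A) : (ψ (star a * a)).re ≤ ‖a‖ ^ 2 :=
  (Complex.re_le_norm _).trans <| (hψ.norm_apply_le _).trans_eq <| by
    rw [CStarRing.norm_star_mul_self, sq]

theorem re_apply_mul_star_self_le (hψ : IsState ψ) (a : A) : (ψ (a * star a)).re ≤ ‖a‖ ^ 2 :=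
  (Complex.re_le_norm _).trans <| (hψ.norm_apply_le _).trans_eq <| by
    rw [CStarRing.norm_self_mul_star, sq]

theorem comp_mulLeftRight (hψ : IsState ψ) {u : A} (hu : u ∈ unitary A) :
    IsState (ψ ∘L ContinuousLinearMap.mulLeftRight ℂ A (star u) u) where
  norm_le := ContinuousLinearMap.opNorm_le_bound _ zero_le_one fun a => by
    rw [ContinuousLinearMap.comp_apply, ContinuousLinearMap.mulLeftRight_apply]
    refine (hψ.norm_apply_le _).trans ?_
    rw [CStarRing.norm_mul_mem_unitary _ hu, CStarRing.norm_mem_unitary_mul _ (Unitary.star_mem hu),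
      one_mul]
  map_one := by
    rw [ContinuousLinearMap.comp_apply, ContinuousLinearMap.mulLeftRight_apply, mul_one,
      Unitary.star_mul_self_of_mem hu, hψ.map_one]

-- Comparing `ψ (a + it)` with `‖a + it‖` for large real `t` forces `ψ a` to be real.
theorem im_apply_eq_zero (hψ : IsState ψ) {a : A} (ha : IsSelfAdjoint a) : (ψ a).im = 0 := by
  have := hψ.nontrivial
  have bound (t : ℝ) : ((ψ a).im + t) ^ 2 ≤ ‖a‖ ^ 2 + t ^ 2 := by
    set z : ℂ := t * Complex.I with hz
    have hz_star : star z = -z := by simp [hz]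
    have hz_norm : ‖z‖ = |t| := by simp [hz]
    have expand : star (a + z • 1) * (a + z • 1) = a * a - (z * z) • 1 := by
      rw [star_add, star_smul, hz_star, ha.star_eq, star_one]
      simp only [add_mul, mul_add, smul_mul_assoc, mul_smul_comm, one_mul, mul_one, neg_smul,
        neg_mul, smul_add, smul_neg, smul_smul]
      abel
    calc ((ψ a).im + t) ^ 2 = (ψ (a + z • 1)).im ^ 2 := by simp [hψ.map_one, hz]
      _ ≤ ‖a + z • 1‖ ^ 2 := by
        rw [sq_le_sq, abs_norm]
        exact (Complex.abs_im_le_norm _).trans (hψ.norm_apply_le _)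
      _ = ‖a * a - (z * z) • 1‖ := by rw [← expand, CStarRing.norm_star_mul_self, sq]
      _ ≤ ‖a‖ ^ 2 + t ^ 2 := by
        refine (norm_sub_le _ _).trans (add_le_add ((norm_mul_le _ _).trans_eq (sq _).symm) ?_)
        rw [norm_smul, norm_mul, hz_norm, abs_mul_abs_self, ← sq, CStarRing.norm_one, mul_one]
  by_contra h
  have at_t := bound ((‖a‖ ^ 2 + 1) / (2 * (ψ a).im))
  have : 2 * (ψ a).im * ((‖a‖ ^ 2 + 1) / (2 * (ψ a).im)) = ‖a‖ ^ 2 + 1 := by field_simp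
  nlinarith [sq_nonneg (ψ a).im]

variable [PartialOrder A] [StarOrderedRing A]

theorem apply_nonneg (hψ : IsState ψ) {a : A} (ha : 0 ≤ a) : 0 ≤ ψ a := by
  refine Complex.nonneg_iff.2 ⟨?_, (hψ.im_apply_eq_zero ha.isSelfAdjoint).symm⟩
  have hsub : ‖algebraMap ℝ A ‖a‖ - a‖ ≤ ‖a‖ := by
    rw [CStarAlgebra.norm_le_iff_le_algebraMap _ (norm_nonneg a)
      (sub_nonneg.2 ha.isSelfAdjoint.le_algebraMap_norm_self)]
    exact sub_le_self _ ha
  have := (Complex.re_le_norm _).trans ((hψ.norm_apply_le _).trans hsub)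
  rw [map_sub, Algebra.algebraMap_eq_smul_one, ← Complex.coe_smul, map_smul, hψ.map_one] at this
  simpa using this

theorem cauchySchwarz (hψ : IsState ψ) (a b : A) :
    ‖ψ (star a * b)‖ ^ 2 ≤ (ψ (star a * a)).re * (ψ (star b * b)).re := by
  let f : A →ₚ[ℂ] ℂ := .mk₀ (ψ : A →ₗ[ℂ] ℂ) fun _ => hψ.apply_nonneg
  have norm_sq (c : A) : ‖f.toPreGNS c‖ ^ 2 = (ψ (star c * c)).re := by
    rw [← Complex.ofReal_re (‖f.toPreGNS c‖ ^ 2), Complex.ofReal_pow, f.preGNS_norm_sq]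
    rfl
  calc ‖ψ (star a * b)‖ ^ 2 = ‖⟪f.toPreGNS a, f.toPreGNS b⟫_ℂ‖ ^ 2 := rfl
    _ ≤ (‖f.toPreGNS a‖ * ‖f.toPreGNS b‖) ^ 2 := by gcongr; exact norm_inner_le_norm _ _
    _ = _ := by rw [mul_pow, norm_sq, norm_sq]

end IsState

end States

section Operators

variable {Y : Type*}

/-- The bounded operators on `ℓ²(Y)`. -/
abbrev BL (Y : Type*) := ℓ²(Y, ℂ) →L[ℂ] ℓ²(Y, ℂ)

/-- The unitary operator on `ℓ²(Y)` permuting the coordinates. -/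
def permOp : Equiv.Perm Y →* BL Y where
  toFun σ := LinearMap.mkContinuous
    { toFun := fun f => ⟨fun y => f (σ⁻¹ y), memℓp_gen
        (σ⁻¹.summable_iff.2 ((memℓp_gen_iff (by norm_num)).1 (lp.memℓp f)))⟩
      map_add' := fun _ _ => rfl
      map_smul' := fun _ _ => rfl } 1 fun f => by
    rw [one_mul, lp.norm_eq_tsum_rpow (by norm_num), lp.norm_eq_tsum_rpow (by norm_num)]
    exact (congrArg (· ^ _) (σ⁻¹.tsum_eq fun y => ‖f y‖ ^ (2 : ℝ≥0∞).toReal)).le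
  map_one' := rfl
  map_mul' σ τ := rfl

variable [MulAction G Y]

variable (G Y) in
/-- The permutation representation of `G` on `ℓ²(Y)`. -/
def permRep : G →* BL Y := permOp.comp (MulAction.toPermHom G Y)

theorem permRep_apply (g : G) (f : ℓ²(Y, ℂ)) (y : Y) : permRep G Y g f y = f (g⁻¹ • y) := rfl

theorem permRep_single [DecidableEq Y] (g : G) (y : Y) (c : ℂ) :
    permRep G Y g (lp.single 2 y c) = lp.single 2 (g • y) c := by
  ext z
  simp only [permRep_apply, lp.single_apply, Pi.single_apply, inv_smul_eq_iff]

theorem star_permRep (g : G) : star (permRep G Y g) = permRep G Y g⁻¹ := by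
  rw [ContinuousLinearMap.star_eq_adjoint, eq_comm, ContinuousLinearMap.eq_adjoint_iff]
  intro f f'
  rw [lp.inner_eq_tsum, lp.inner_eq_tsum, ← (MulAction.toPerm (α := G) g⁻¹).tsum_eq]
  simp [permRep_apply]

theorem permRep_mem_unitary (g : G) : permRep G Y g ∈ unitary (BL Y) := by
  rw [Unitary.mem_iff, star_permRep, ← map_mul, ← map_mul, inv_mul_cancel, mul_inv_cancel, map_one]
  exact ⟨rfl, rfl⟩

theorem norm_permRep_apply (g : G) (f : ℓ²(Y, ℂ)) : ‖permRep G Y g f‖ = ‖f‖ :=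
  ContinuousLinearMap.norm_map_of_mem_unitary (permRep_mem_unitary g) f

theorem norm_permRep_le (g : G) : ‖permRep G Y g‖ ≤ 1 :=
  ContinuousLinearMap.opNorm_le_bound _ zero_le_one fun f => by rw [norm_permRep_apply, one_mul]

theorem lreg_eq_permRep (g : G) : lreg g = permRep G G g := by
  unfold lreg
  unfold lregE
  rfl

variable {X : Type*} [TopologicalSpace X] [CompactSpace X]

/-- The multiplication operator on `ℓ²(Y)` of a continuous function pulled back along a map
`Y → X`. -/
def mulOp (o : Y → X) : C(X, ℝ) →ₐ[ℝ] BL Y where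
  toFun k := lp.mapCLM 2 (fun y => (k (o y) : ℂ) • .id ℂ ℂ) (norm_nonneg k) fun y => by
    simpa [norm_smul] using k.norm_coe_le_norm (o y)
  map_one' := by ext f y; simp
  map_mul' k l := by ext f y; simp [mul_assoc]
  map_zero' := by ext f y; simp
  map_add' k l := by ext f y; simp [add_mul]
  commutes' c := by ext f y; simp [Algebra.algebraMap_eq_smul_one]

theorem mulOp_apply (o : Y → X) (k : C(X, ℝ)) (f : ℓ²(Y, ℂ)) (y : Y) :
    mulOp o k f y = (k (o y) : ℂ) * f y := rfl

theorem norm_mulOp_le (o : Y → X) (k : C(X, ℝ)) : ‖mulOp o k‖ ≤ ‖k‖ :=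
  lp.norm_mapCLM_le 2 _ (norm_nonneg k) fun y => by
    simpa [norm_smul] using k.norm_coe_le_norm (o y)

theorem star_mulOp (o : Y → X) (k : C(X, ℝ)) : star (mulOp o k) = mulOp o k := by
  rw [ContinuousLinearMap.star_eq_adjoint, eq_comm, ContinuousLinearMap.eq_adjoint_iff]
  intro f f'
  rw [lp.inner_eq_tsum, lp.inner_eq_tsum]
  refine tsum_congr fun y => ?_
  simp only [mulOp_apply, RCLike.inner_apply, map_mul, Complex.conj_ofReal]
  ring

theorem mulOp_nonneg (o : Y → X) {k : C(X, ℝ)} (hk : 0 ≤ k) : 0 ≤ mulOp o k := by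
  let r : C(X, ℝ) := ⟨fun x => √(k x), by fun_prop⟩
  have : r * r = k := ContinuousMap.ext fun x => Real.mul_self_sqrt (hk x)
  rw [← this, map_mul]
  nth_rw 1 [← star_mulOp]
  exact star_mul_self_nonneg _

theorem permRep_inv_mul_mulOp_mul [MulAction G X] [ContinuousConstSMul G X] {o : Y → X}
    (ho : ∀ (g : G) y, o (g • y) = g • o y) (g : G) (k : C(X, ℝ)) :
    permRep G Y g⁻¹ * mulOp o k * permRep G Y g = mulOp o (k.comp (smulMap X g)) := by
  ext f y
  simp [permRep_apply, mulOp_apply, ho, smulMap]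

end Operators

section Concentration

variable {X Y : Type*} [TopologicalSpace X] [CompactSpace X] {o : Y → X}
  {ψ : StrongDual ℂ (BL Y)}

/-- The restriction of (the real part of) a functional on the operators on `ℓ²(Y)` to the
multiplication operators by continuous functions on `X`. -/
def restrictMulOp (o : Y → X) (ψ : StrongDual ℂ (BL Y)) : WeakDual ℝ C(X, ℝ) :=
  StrongDual.toWeakDual <| Complex.reCLM ∘L ψ.restrictScalars ℝ ∘L
    (mulOp o).toLinearMap.mkContinuous 1 fun k => by simpa using norm_mulOp_le o k

theorem restrictMulOp_apply (k : C(X, ℝ)) : restrictMulOp o ψ k = (ψ (mulOp o k)).re := rfl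

/-- The translate of a functional on the operators on `ℓ²(Y)` by a group element, acting on
operators by conjugation. -/
def conjDual [MulAction G Y] (g : G) (ψ : StrongDual ℂ (BL Y)) : StrongDual ℂ (BL Y) :=
  ψ ∘L ContinuousLinearMap.mulLeftRight ℂ (BL Y) (permRep G Y g⁻¹) (permRep G Y g)

theorem conjDual_apply [MulAction G Y] (g : G) (T : BL Y) :
    conjDual g ψ T = ψ (permRep G Y g⁻¹ * T * permRep G Y g) := rfl

theorem conjDual_permRep [MulAction G Y] (g t : G) :
    conjDual g ψ (permRep G Y t) = ψ (permRep G Y (g⁻¹ * t * g)) := by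
  rw [conjDual_apply, ← map_mul, ← map_mul]

namespace IsState

theorem conj [MulAction G Y] (hψ : IsState ψ) (g : G) : IsState (conjDual g ψ) := by
  rw [conjDual, ← star_permRep]
  exact hψ.comp_mulLeftRight (permRep_mem_unitary g)

theorem restrictMulOp_mem (hψ : IsState ψ) (o : Y → X) :
    restrictMulOp o ψ ∈ probabilityStates X := by
  refine ⟨?_, fun k hk => (Complex.nonneg_iff.1 (hψ.apply_nonneg (mulOp_nonneg o hk))).1⟩
  rw [restrictMulOp_apply, _root_.map_one (mulOp o), hψ.map_one, Complex.one_re]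

variable {k : C(X, ℝ)}

theorem restrictMulOp_mul_self_le (hψ : IsState ψ) (hk₀ : 0 ≤ k) (hk₁ : k ≤ 1) :
    (ψ (mulOp o k * mulOp o k)).re ≤ restrictMulOp o ψ k := by
  rw [← map_mul]
  exact probabilityStates.mono (hψ.restrictMulOp_mem o) fun x =>
    mul_le_of_le_one_right (hk₀ x) (hk₁ x)

theorem norm_apply_mulOp_mul_sq_le (hψ : IsState ψ) (hk₀ : 0 ≤ k) (hk₁ : k ≤ 1) (T : BL Y) :
    ‖ψ (mulOp o k * T)‖ ^ 2 ≤ restrictMulOp o ψ k * ‖T‖ ^ 2 := by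
  have h := hψ.cauchySchwarz (mulOp o k) T
  rw [star_mulOp] at h
  refine h.trans ((mul_le_mul_of_nonneg_right (hψ.restrictMulOp_mul_self_le hk₀ hk₁) ?_).trans
    (mul_le_mul_of_nonneg_left (hψ.re_apply_star_mul_self_le T) ?_))
  · exact (Complex.nonneg_iff.1 (hψ.apply_nonneg (star_mul_self_nonneg T))).1
  · exact (hψ.restrictMulOp_mem o).2 k hk₀

theorem norm_apply_mul_mulOp_sq_le (hψ : IsState ψ) (hk₀ : 0 ≤ k) (hk₁ : k ≤ 1) (T : BL Y) :
    ‖ψ (T * mulOp o k)‖ ^ 2 ≤ ‖T‖ ^ 2 * restrictMulOp o ψ k := by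
  have h := hψ.cauchySchwarz (star T) (mulOp o k)
  rw [star_mulOp, star_star] at h
  refine h.trans ((mul_le_mul_of_nonneg_left (hψ.restrictMulOp_mul_self_le hk₀ hk₁) ?_).trans
    (mul_le_mul_of_nonneg_right (hψ.re_apply_mul_star_self_le T) ?_))
  · exact (Complex.nonneg_iff.1 (hψ.apply_nonneg (mul_star_self_nonneg T))).1
  · exact (hψ.restrictMulOp_mem o).2 k hk₀

end IsState

theorem restrictMulOp_conjDual [MulAction G X] [ContinuousConstSMul G X] [MulAction G Y]
    (ho : ∀ (g : G) y, o (g • y) = g • o y) (g : G) (k : C(X, ℝ)) :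
    restrictMulOp o (conjDual g ψ) k = restrictMulOp o ψ (k.comp (smulMap X g)) := by
  rw [restrictMulOp_apply, conjDual_apply, permRep_inv_mul_mulOp_mul ho, restrictMulOp_apply]

/-- A functional on the operators on `ℓ²(Y)` is `ε`-concentrated on a set `U` if it is at most
`ε ^ 2` on multiplication by `1 - h`, for some `h` with values in `[0, 1]` vanishing off `U`. -/
def IsConcentrated (o : Y → X) (ψ : StrongDual ℂ (BL Y)) (U : Set X) (ε : ℝ) : Prop :=
  ∃ h : C(X, ℝ), 0 ≤ h ∧ h ≤ 1 ∧ (∀ x ∉ U, h x = 0) ∧ restrictMulOp o ψ (1 - h) ≤ ε ^ 2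

theorem exists_isConcentrated_conjDual [T2Space X] [MulAction G X] [ContinuousConstSMul G X]
    [MulAction G Y] (hX : IsBoundary G X) (hψ : IsState ψ)
    (ho : ∀ (g : G) y, o (g • y) = g • o y) {w : X} {U : Set X} (hU : U ∈ 𝓝 w) {ε : ℝ}
    (hε : 0 < ε) : ∃ g : G, IsConcentrated o (conjDual g ψ) U ε := by
  obtain ⟨h, hw, h₀, h₁, hUh⟩ := exists_bump hU
  obtain ⟨g, hg⟩ := hX _ (hψ.restrictMulOp_mem o) h w (ε ^ 2) (by positivity)
  refine ⟨g, h, h₀, h₁, hUh, ?_⟩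
  rw [map_sub, ((hψ.conj g).restrictMulOp_mem o).1, restrictMulOp_conjDual ho]
  linarith

-- A concentrated state only sees the compression `M h * T * M h`.
theorem IsConcentrated.norm_apply_le {U : Set X} {ε : ℝ} (hU : IsConcentrated o ψ U ε)
    (hψ : IsState ψ) (hε : 0 ≤ ε) {T : BL Y}
    (hT : ∀ h : C(X, ℝ), (∀ x ∉ U, h x = 0) → mulOp o h * T * mulOp o h = 0) :
    ‖ψ T‖ ≤ 2 * ε * ‖T‖ := by
  obtain ⟨h, h₀, h₁, hUh, hε'⟩ := hU
  have hk₀ : 0 ≤ 1 - h := sub_nonneg.2 h₁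
  have hk₁ : 1 - h ≤ 1 := sub_le_self _ h₀
  have hψk := (hψ.restrictMulOp_mem o).2 _ hk₀
  have split : T = mulOp o (1 - h) * T + mulOp o h * T * mulOp o (1 - h) := by
    rw [map_sub, map_one, mul_sub, mul_one, hT h hUh]
    noncomm_ring
  have norm_hT : ‖mulOp o h * T‖ ≤ ‖T‖ := by
    refine (norm_mul_le _ _).trans (mul_le_of_le_one_left (norm_nonneg _) ?_)
    refine (norm_mulOp_le o h).trans ((ContinuousMap.norm_le _ zero_le_one).2 fun x => ?_)
    exact (Real.norm_of_nonneg (h₀ x)).trans_le (h₁ x)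
  have left : ‖ψ (mulOp o (1 - h) * T)‖ ≤ ε * ‖T‖ := by
    refine (pow_le_pow_iff_left₀ (norm_nonneg _) (by positivity) two_ne_zero).1 ?_
    rw [mul_pow]
    exact (hψ.norm_apply_mulOp_mul_sq_le hk₀ hk₁ T).trans (by gcongr)
  have right : ‖ψ (mulOp o h * T * mulOp o (1 - h))‖ ≤ ‖T‖ * ε := by
    refine (pow_le_pow_iff_left₀ (norm_nonneg _) (by positivity) two_ne_zero).1 ?_
    rw [mul_pow]
    exact (hψ.norm_apply_mul_mulOp_sq_le hk₀ hk₁ _).trans (by gcongr)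
  calc ‖ψ T‖ ≤ ‖ψ (mulOp o (1 - h) * T)‖ + ‖ψ (mulOp o h * T * mulOp o (1 - h))‖ := by
        conv_lhs => rw [split, map_add]
        exact norm_add_le _ _
    _ ≤ 2 * ε * ‖T‖ := by linarith

theorem mulOp_mul_permRep_mul_mulOp_eq_zero [MulAction G X] [MulAction G Y]
    (ho : ∀ (g : G) y, o (g • y) = g • o y) {h : C(X, ℝ)} {U : Set X} (hh : ∀ x ∉ U, h x = 0)
    {t : G} (ht : ∀ x ∈ U, t • x ∉ U) : mulOp o h * permRep G Y t * mulOp o h = 0 := by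
  ext f y
  change (h (o y) : ℂ) * ((h (o (t⁻¹ • y)) : ℂ) * f (t⁻¹ • y)) = 0
  by_cases hy : o (t⁻¹ • y) ∈ U
  · have := ht _ hy
    rw [← ho, smul_inv_smul] at this
    rw [hh _ this, Complex.ofReal_zero, zero_mul]
  · rw [hh _ hy, Complex.ofReal_zero, zero_mul, mul_zero]

theorem mulOp_mul_permRep_eq_mulOp [MulAction G X] [MulAction G Y] (hoi : o.Injective)
    (ho : ∀ (g : G) y, o (g • y) = g • o y) {h : C(X, ℝ)} {U : Set X} (hh : ∀ x ∉ U, h x = 0)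
    {t : G} (ht : ∀ x ∈ U, t • x = x) : mulOp o h * permRep G Y t = mulOp o h := by
  ext f y
  change (h (o y) : ℂ) * f (t⁻¹ • y) = (h (o y) : ℂ) * f y
  by_cases hy : o y ∈ U
  · rw [inv_smul_eq_iff.2 (hoi ((ho t y).trans (ht _ hy))).symm]
  · rw [hh _ hy, Complex.ofReal_zero, zero_mul, zero_mul]

variable [T2Space X] [MulAction G X] [ContinuousConstSMul G X]

namespace IsBoundary

variable [MulAction G Y]

theorem exists_norm_conjDual_permRep_le (hX : IsBoundary G X) (hψ : IsState ψ)
    (ho : ∀ (g : G) y, o (g • y) = g • o y) {F : Finset G} {w : X} (hF : ∀ t ∈ F, t • w ≠ w)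
    {ε : ℝ} (hε : 0 < ε) : ∃ g : G, ∀ t ∈ F, ‖conjDual g ψ (permRep G Y t)‖ ≤ ε := by
  obtain ⟨U, hU, hUF⟩ := exists_nhds_forall_smul_notMem hF
  obtain ⟨g, hg⟩ := exists_isConcentrated_conjDual hX hψ ho hU (half_pos hε)
  refine ⟨g, fun t ht => (hg.norm_apply_le (hψ.conj g) (half_pos hε).le fun h hh =>
    mulOp_mul_permRep_mul_mulOp_eq_zero ho hh (hUF t ht)).trans ?_⟩
  rw [mul_div_cancel₀ ε two_ne_zero]
  exact mul_le_of_le_one_right hε.le (norm_permRep_le t)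

theorem exists_norm_conjDual_permRep_sub_one_le (hX : IsBoundary G X) (hψ : IsState ψ)
    (ho : ∀ (g : G) y, o (g • y) = g • o y) (hoi : o.Injective) {t : G} {w : X}
    (ht : ∀ᶠ x in 𝓝 w, t • x = x) {ε : ℝ} (hε : 0 < ε) :
    ∃ g : G, ‖conjDual g ψ (permRep G Y t) - 1‖ ≤ ε := by
  obtain ⟨g, hg⟩ := exists_isConcentrated_conjDual hX hψ ho ht (show 0 < ε / 4 by positivity)
  refine ⟨g, ?_⟩
  have bound := hg.norm_apply_le (T := permRep G Y t - 1) (hψ.conj g) (by positivity)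
    fun h hh => by rw [mul_sub, mul_one, mulOp_mul_permRep_eq_mulOp hoi ho hh fun _ => id,
      sub_self, zero_mul]
  have norm_le : ‖permRep G Y t - 1‖ ≤ 2 := by
    have := norm_sub_le_of_le (norm_permRep_le (Y := Y) t) (norm_permRep_le (Y := Y) (1 : G))
    rwa [map_one, one_add_one_eq_two] at this
  rw [map_sub, (hψ.conj g).map_one] at bound
  nlinarith

end IsBoundary

end Concentration

section GroupAlgebra

variable {Y : Type*} [MulAction G Y]

variable (G Y) in
/-- The representation of the group algebra on `ℓ²(Y)`, as a linear map. -/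
def groupAlgRep : (G →₀ ℂ) →ₗ[ℂ] BL Y := Finsupp.linearCombination ℂ (permRep G Y)

theorem groupAlgRep_single (g : G) (z : ℂ) :
    groupAlgRep G Y (.single g z) = z • permRep G Y g :=
  Finsupp.linearCombination_single ..

theorem groupAlgRep_apply (c : G →₀ ℂ) (f : ℓ²(Y, ℂ)) :
    groupAlgRep G Y c f = c.sum fun t z => z • permRep G Y t f := by
  rw [groupAlgRep, Finsupp.linearCombination_apply, Finsupp.sum, Finsupp.sum,
    sum_apply]
  rfl

theorem inner_groupAlgRep_single [DecidableEq G] (c : G →₀ ℂ) (g : G) :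
    inner ℂ (lp.single 2 g (1 : ℂ) : ℓ²(G, ℂ)) (groupAlgRep G G c (lp.single 2 g 1)) = c 1 := by
  induction c using Finsupp.induction_linear with
  | zero => simp
  | add c d hc hd => rw [map_add, add_apply, inner_add_right, hc, hd]; rfl
  | single t z =>
    rw [groupAlgRep_single, smul_apply, inner_smul_right, permRep_single,
      lp.inner_single_left, lp.single_apply]
    by_cases ht : t = 1 <;> simp [ht]

theorem norm_inner_single_le {Y : Type*} [DecidableEq Y] (T : BL Y) (y : Y) :
    ‖inner ℂ (lp.single 2 y (1 : ℂ) : ℓ²(Y, ℂ)) (T (lp.single 2 y 1))‖ ≤ ‖T‖ := by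
  have norm_single : ‖(lp.single 2 y (1 : ℂ) : ℓ²(Y, ℂ))‖ = 1 := by simp
  refine (norm_inner_le_norm _ _).trans ?_
  rw [norm_single, one_mul]
  exact (T.le_opNorm _).trans (by rw [norm_single, mul_one])

theorem norm_apply_one_le_norm_groupAlgRep (c : G →₀ ℂ) : ‖c 1‖ ≤ ‖groupAlgRep G G c‖ := by
  classical
  rw [← inner_groupAlgRep_single c 1]
  exact norm_inner_single_le _ _

theorem adjoin_range_eq_span {A : Type*} [Ring A] [StarRing A] [Algebra ℂ A] [StarModule ℂ A]
    {u : G →* A} (hu : ∀ g, star (u g) = u g⁻¹) :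
    Subalgebra.toSubmodule (StarAlgebra.adjoin ℂ (range u)).toSubalgebra =
      Submodule.span ℂ (range u) := by
  have star_range : star (range u) = range u := by
    ext a
    refine ⟨fun ⟨g, hg⟩ => ⟨g⁻¹, ?_⟩, fun ⟨g, hg⟩ => ⟨g⁻¹, ?_⟩⟩
    · rw [← hu, hg, star_star]
    · rw [← hu, hg]
  rw [StarAlgebra.adjoin_toSubalgebra, star_range, union_self, Algebra.adjoin_eq_span,
    ← MonoidHom.coe_mrange, Submonoid.closure_eq]

theorem mem_adjoin_range_permRep {T : BL Y} :
    T ∈ StarAlgebra.adjoin ℂ (range (permRep G Y)) ↔ T ∈ LinearMap.range (groupAlgRep G Y) := by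
  rw [groupAlgRep, Finsupp.range_linearCombination, ← adjoin_range_eq_span star_permRep]
  rfl

end GroupAlgebra

section ReducedAlgebra

theorem redCstar_eq : redCstar G =
    (StarAlgebra.adjoin ℂ (range (permRep G G))).topologicalClosure := by
  unfold redCstar
  congr 3
  funext g
  exact lreg_eq_permRep g

theorem isClosed_redCstar : IsClosed (redCstar G : Set (BL G)) := by
  rw [redCstar_eq]
  exact StarSubalgebra.isClosed_topologicalClosure _

instance : CompleteSpace (redCstar G) := isClosed_redCstar.completeSpace_coe

theorem permRep_mem_redCstar (g : G) : permRep G G g ∈ redCstar G := by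
  rw [redCstar_eq]
  exact StarSubalgebra.le_topologicalClosure _ (StarAlgebra.subset_adjoin ℂ _ ⟨g, rfl⟩)

theorem exists_norm_sub_groupAlgRep_lt {a : BL G} (ha : a ∈ redCstar G) {ε : ℝ} (hε : 0 < ε) :
    ∃ c : G →₀ ℂ, ‖a - groupAlgRep G G c‖ < ε := by
  rw [redCstar_eq] at ha
  obtain ⟨_, hb, hab⟩ := Metric.mem_closure_iff.1 ha ε hε
  obtain ⟨c, rfl⟩ := mem_adjoin_range_permRep.1 hb
  exact ⟨c, by rwa [← dist_eq_norm]⟩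

end ReducedAlgebra

section Annihilation

theorem exists_isState_of_forall_one_le_norm_one_sub {A : Type*} [CStarAlgebra A]
    {J : Submodule ℂ A} (hJ : ∀ a ∈ J, 1 ≤ ‖1 - a‖) :
    ∃ ψ : StrongDual ℂ A, IsState ψ ∧ ∀ a ∈ J, ψ a = 0 := by
  have : Nontrivial A := ⟨1, 0, fun h => by simpa [h, zero_lt_one.not_ge] using hJ 0 J.zero_mem⟩
  have norm_mk_one : ‖(Submodule.Quotient.mk 1 : A ⧸ J)‖ = 1 := by
    refine le_antisymm ((Submodule.Quotient.norm_mk_le J 1).trans_eq CStarRing.norm_one) ?_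
    refine (QuotientAddGroup.le_norm_iff (M := A) (S := J.toAddSubgroup)).2 fun m hm => ?_
    simpa using hJ _ ((Submodule.Quotient.eq J).1 hm.symm)
  obtain ⟨φ, hφ, hφ₁⟩ := exists_dual_vector'' ℂ (Submodule.Quotient.mk 1 : A ⧸ J)
  refine ⟨(φ : (A ⧸ J) →ₗ[ℂ] ℂ) ∘ₗ J.mkQ |>.mkContinuous 1 fun a => ?_, ⟨?_, ?_⟩, fun a ha => ?_⟩
  · exact (φ.le_of_opNorm_le hφ _).trans (by gcongr; exact Submodule.Quotient.norm_mk_le J a)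
  · exact LinearMap.mkContinuous_norm_le _ zero_le_one _
  · exact hφ₁.trans (by rw [norm_mk_one]; rfl)
  · exact (congrArg φ ((Submodule.Quotient.mk_eq_zero J).2 ha)).trans (map_zero φ)

theorem exists_isState_of_ne_top {I : TwoSidedIdeal (redCstar G)} (hI : I ≠ ⊤) :
    ∃ ψ : StrongDual ℂ (BL G), IsState ψ ∧ ∀ a ∈ I, ψ (a : BL G) = 0 := by
  obtain ⟨ψ, hψ, hψI⟩ := exists_isState_of_forall_one_le_norm_one_sub
    (J := (I.asIdeal.restrictScalars ℂ).map (redCstar G).subtype.toLinearMap) <| by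
      rintro _ ⟨a, ha, rfl⟩
      by_contra! h
      refine hI ((TwoSidedIdeal.one_mem_iff I).1 ?_)
      have : IsUnit a := sub_sub_cancel 1 a ▸ (Units.oneSub (1 - a) h).isUnit
      obtain ⟨u, rfl⟩ := this
      simpa using I.mul_mem_left (↑u⁻¹ : redCstar G) _ ha
  exact ⟨ψ, hψ, fun a ha => hψI a ⟨a, ha, rfl⟩⟩

theorem exists_inner_single_ne_zero [DecidableEq G] {I : TwoSidedIdeal (redCstar G)} (hI : I ≠ ⊥) :
    ∃ b ∈ I, ∃ g : G, inner ℂ (lp.single 2 g (1 : ℂ) : ℓ²(G, ℂ))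
      ((b : BL G) (lp.single 2 g 1)) ≠ 0 := by
  by_contra! h
  refine hI (eq_bot_iff.2 fun a ha => (TwoSidedIdeal.mem_bot _).2 (Subtype.ext ?_))
  refine lp.ext_continuousLinearMap (by norm_num) fun g => ContinuousLinearMap.ext_ring ?_
  refine (inner_self_eq_zero (𝕜 := ℂ)).1 ?_
  rw [← h (star a * a) (I.mul_mem_left _ _ ha) g]
  exact (ContinuousLinearMap.adjoint_inner_right (a : BL G) _ _).symm

theorem exists_pos_norm_sum_mul_le {ι R : Type*} [SeminormedRing R] (s : Finset ι) (c : ι → R)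
    {ε : ℝ} (hε : 0 < ε) :
    ∃ δ > 0, ∀ b : ι → R, (∀ i ∈ s, ‖b i‖ ≤ δ) → ‖∑ i ∈ s, c i * b i‖ ≤ ε := by
  set C := ∑ i ∈ s, ‖c i‖
  have C_lt : 0 < C + 1 := by positivity
  refine ⟨ε / (C + 1), by positivity, fun b hb => ?_⟩
  calc ‖∑ i ∈ s, c i * b i‖ ≤ ∑ i ∈ s, ‖c i‖ * (ε / (C + 1)) :=
        norm_sum_le_of_le _ fun i hi => (norm_mul_le _ _).trans (by gcongr; exact hb i hi)
    _ = C / (C + 1) * ε := by rw [← Finset.sum_mul]; ring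
    _ ≤ ε := mul_le_of_le_one_left hε.le ((div_le_one C_lt).2 (by linarith))

namespace IsBoundary

variable {X : Type*} [TopologicalSpace X] [CompactSpace X] [T2Space X] [MulAction G X]
  [ContinuousConstSMul G X]

theorem exists_norm_conjDual_groupAlgRep_sub_le [DecidableEq G] {Y : Type*} [MulAction G Y]
    {ψ : StrongDual ℂ (BL Y)} {o : Y → X} (hX : IsBoundary G X) (hψ : IsState ψ)
    (ho : ∀ (g : G) y, o (g • y) = g • o y) {c : G →₀ ℂ} {w : X}
    (hw : ∀ t ∈ c.support.erase 1, t • w ≠ w) {ε : ℝ} (hε : 0 < ε) :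
    ∃ g : G, ‖conjDual g ψ (groupAlgRep G Y c) - c 1‖ ≤ ε := by
  set F := c.support.erase 1
  obtain ⟨δ, hδ, sum_le⟩ := exists_pos_norm_sum_mul_le F c hε
  obtain ⟨g, hg⟩ := hX.exists_norm_conjDual_permRep_le hψ ho hw hδ
  refine ⟨g, ?_⟩
  have expand : conjDual g ψ (groupAlgRep G Y c) - c 1 =
      ∑ t ∈ F, c t * conjDual g ψ (permRep G Y t) := by
    have split : groupAlgRep G Y c = groupAlgRep G Y (c.erase 1) + c 1 • 1 := by
      rw [← map_one (permRep G Y), ← groupAlgRep_single, ← map_add, Finsupp.erase_add_single]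
    rw [split, map_add, map_smul, (hψ.conj g).map_one, smul_eq_mul, mul_one, add_sub_cancel_right,
      groupAlgRep, Finsupp.linearCombination_apply, map_finsuppSum, Finsupp.sum,
      Finsupp.support_erase]
    refine Finset.sum_congr rfl fun t ht => ?_
    rw [Finsupp.erase_ne (Finset.ne_of_mem_erase ht), map_smul, smul_eq_mul]
  rw [expand]
  exact sum_le _ hg

theorem exists_finset_of_not_isCstarSimple [Nonempty X] (hX : IsBoundary G X)
    (hG : ¬ IsCstarSimple G) : ∃ F : Finset G, 1 ∉ F ∧ ∀ x : X, ∃ t ∈ F, t • x = x := by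
  classical
  rw [IsCstarSimple] at hG
  push Not at hG
  obtain ⟨I, -, hbot, htop⟩ := hG
  obtain ⟨ψ, hψ, hψI⟩ := exists_isState_of_ne_top htop
  obtain ⟨b, hb, g₀, hb₀⟩ := exists_inner_single_ne_zero hbot
  set τ := inner ℂ (lp.single 2 g₀ (1 : ℂ) : ℓ²(G, ℂ)) ((b : BL G) (lp.single 2 g₀ 1)) with hτ
  have norm_pos : 0 < ‖τ‖ / 3 := by positivity
  obtain ⟨c, hc⟩ := exists_norm_sub_groupAlgRep_lt b.2 norm_pos
  refine ⟨c.support.erase 1, Finset.notMem_erase _ _, ?_⟩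
  by_contra! h
  obtain ⟨w, hw⟩ := h
  obtain ⟨x₀⟩ := ‹Nonempty X›
  obtain ⟨g, hg⟩ := hX.exists_norm_conjDual_groupAlgRep_sub_le (Y := G) (o := (· • x₀)) hψ
    (fun g y => mul_smul g y x₀) hw norm_pos
  let u (g : G) : redCstar G := ⟨permRep G G g, permRep_mem_redCstar g⟩
  have hψb : conjDual g ψ (b : BL G) = 0 :=
    hψI (u g⁻¹ * b * u g) (I.mul_mem_right _ _ (I.mul_mem_left _ _ hb))
  have hτc : ‖τ - c 1‖ < ‖τ‖ / 3 := by
    refine lt_of_le_of_lt ?_ hc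
    rw [hτ, ← inner_groupAlgRep_single c g₀, ← inner_sub_right, ← sub_apply]
    exact norm_inner_single_le _ _
  have hψc : ‖conjDual g ψ (groupAlgRep G G c)‖ < ‖τ‖ / 3 := by
    refine lt_of_le_of_lt ?_ hc
    simpa [hψb] using (hψ.conj g).norm_apply_le ((b : BL G) - groupAlgRep G G c)
  have tri₁ := norm_sub_le (conjDual g ψ (groupAlgRep G G c))
    (conjDual g ψ (groupAlgRep G G c) - c 1)
  have tri₂ := norm_le_norm_sub_add τ (c 1)
  rw [sub_sub_cancel] at tri₁
  linarith

end IsBoundary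

end Annihilation

section InvariantMeasures

variable {X : Type*} [TopologicalSpace X] [CompactSpace X] [MulAction G X]
  [ContinuousConstSMul G X]

theorem abs_mean_apply_le {S : Type*} {m : lp (fun _ : S => ℝ) ∞ →ₗ[ℝ] ℝ} (m_one : m 1 = 1)
    (m_nonneg : ∀ f : lp (fun _ : S => ℝ) ∞, (∀ k, 0 ≤ f k) → 0 ≤ m f)
    (f : lp (fun _ : S => ℝ) ∞) : |m f| ≤ ‖f‖ := by
  have bound (k : S) : |f k| ≤ ‖f‖ := lp.norm_apply_le_norm ENNReal.top_ne_zero f k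
  have upper := m_nonneg (‖f‖ • 1 - f) fun k => by
    change 0 ≤ ‖f‖ * 1 - f k
    linarith [le_abs_self (f k), bound k]
  have lower := m_nonneg (‖f‖ • 1 + f) fun k => by
    change 0 ≤ ‖f‖ * 1 + f k
    linarith [neg_le_abs (f k), bound k]
  rw [map_sub, map_smul, m_one, smul_eq_mul, mul_one] at upper
  rw [map_add, map_smul, m_one, smul_eq_mul, mul_one] at lower
  exact abs_le.2 ⟨by linarith, by linarith⟩

theorem IsAmenable.exists_invariant_probabilityState [Nonempty X] {H : Subgroup G}
    (hH : IsAmenable H) :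
    ∃ ν ∈ probabilityStates X, ∀ s ∈ H, ∀ k : C(X, ℝ), ν (k.comp (smulMap X s)) = ν k := by
  obtain ⟨m, m_one, m_nonneg, m_inv⟩ := hH
  obtain ⟨x⟩ := ‹Nonempty X›
  let orbitMap : C(X, ℝ) →ₗ[ℝ] lp (fun _ : H => ℝ) ∞ :=
    { toFun := fun k => ⟨fun j => k ((j : G) • x), memℓp_infty
        ⟨‖k‖, forall_mem_range.2 fun _ => k.norm_coe_le_norm _⟩⟩
      map_add' := fun _ _ => rfl
      map_smul' := fun _ _ => rfl }
  have bound (k : C(X, ℝ)) : ‖m (orbitMap k)‖ ≤ 1 * ‖k‖ :=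
    (abs_mean_apply_le m_one m_nonneg _).trans <|
      (lp.norm_le_of_forall_le (norm_nonneg k) fun _ => k.norm_coe_le_norm _).trans (one_mul _).ge
  refine ⟨StrongDual.toWeakDual ((m ∘ₗ orbitMap).mkContinuous 1 bound),
    ⟨m_one, fun k hk => m_nonneg _ fun _ => hk _⟩, fun s hs k => ?_⟩
  refine (congrArg m ?_).trans (m_inv (⟨s, hs⟩⁻¹ : H) (orbitMap k))
  ext j
  exact congrArg k (by rw [inv_inv]; exact (mul_smul s (j : G) x).symm)

variable [T2Space X]

/-- The invariant measure of `H` cannot be concentrated, after translation by `g`, near a point that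
no conjugate of an element of `H` fixes: it would have to charge two disjoint sets equally. -/
theorem IsBoundary.exists_mem_smul_eq [Nonempty X] (hX : IsBoundary G X) {H : Subgroup G}
    (hH : IsAmenable H) {F : Finset G} (hF : ∀ g, ∃ t ∈ F, t ∈ conjSub g H) (w : X) :
    ∃ t ∈ F, t • w = w := by
  by_contra! hw
  obtain ⟨U, hU, disj⟩ := exists_nhds_forall_smul_notMem hw
  obtain ⟨h, hw_one, -, h_le_one, h_zero⟩ := exists_bump hU
  obtain ⟨ν, hν, inv⟩ := hH.exists_invariant_probabilityState (X := X)
  obtain ⟨g, hg⟩ := hX ν hν h w (1 / 2) one_half_pos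
  obtain ⟨t, htF, ht⟩ := hF g
  have shift : ν (h.comp (smulMap X (t * g))) = ν (h.comp (smulMap X g)) := by
    rw [← inv _ (mem_conjSub.1 ht) (h.comp (smulMap X g)), ContinuousMap.comp_assoc,
      ← smulMap_mul, mul_assoc, mul_inv_cancel_left]
  have add_le : ν (h.comp (smulMap X g) + h.comp (smulMap X (t * g))) ≤ ν 1 := by
    refine probabilityStates.mono hν fun x => ?_
    change h (g • x) + h ((t * g) • x) ≤ 1
    rw [mul_smul]
    by_cases hx : g • x ∈ U
    · rw [h_zero _ (disj t htF _ hx), add_zero]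
      exact h_le_one _
    · rw [h_zero _ hx, zero_add]
      exact h_le_one _
  rw [map_add, shift, hν.1] at add_le
  rw [hw_one] at hg
  linarith

end InvariantMeasures

section Reiter

/-- A finitely supported function, as an element of `ℓ^p`. -/
def finsuppToLp (𝕜 : Type*) [NormedField 𝕜] (p : ℝ≥0∞) (S : Type*) :
    (S →₀ 𝕜) →ₗ[𝕜] lp (fun _ : S => 𝕜) p where
  toFun f := ⟨fun s => f s, (memℓp_zero f.hasFiniteSupport).of_exponent_ge zero_le⟩
  map_add' _ _ := rfl
  map_smul' _ _ := rfl

theorem finsuppToLp_apply {𝕜 : Type*} [NormedField 𝕜] {p : ℝ≥0∞} {S : Type*} (f : S →₀ 𝕜) (s : S) :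
    finsuppToLp 𝕜 p S f s = f s := rfl

theorem finsuppToLp_single {𝕜 : Type*} [NormedField 𝕜] {p : ℝ≥0∞} {S : Type*} [DecidableEq S]
    (s : S) (a : 𝕜) : finsuppToLp 𝕜 p S (.single s a) = lp.single p s a := by
  ext x
  rw [finsuppToLp_apply, lp.single_apply, Finsupp.single_eq_pi_single]

/-- The finitely supported probability measures on a set `s`. -/
def finProb {S : Type*} (s : Set S) : Set (S →₀ ℝ) :=
  {f | 0 ≤ f ∧ f.sum (fun _ a => a) = 1 ∧ (f.support : Set S) ⊆ s}

theorem single_mem_finProb {S : Type*} {s : Set S} {k : S} (hk : k ∈ s) :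
    Finsupp.single k 1 ∈ finProb s :=
  ⟨Finsupp.single_nonneg.2 zero_le_one, Finsupp.sum_single_index rfl,
    fun _ hx => Finset.mem_singleton.1 (Finsupp.support_single_subset hx) ▸ hk⟩

theorem convex_finProb {S : Type*} (s : Set S) : Convex ℝ (finProb s) := by
  classical
  intro f hf g hg a b ha hb hab
  refine ⟨add_nonneg (smul_nonneg ha hf.1) (smul_nonneg hb hg.1), ?_, fun x hx => ?_⟩
  · rw [Finsupp.sum_add_index' (fun _ => rfl) (fun _ _ _ => rfl),
      Finsupp.sum_smul_index (fun _ => rfl), Finsupp.sum_smul_index (fun _ => rfl),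
      ← Finsupp.mul_sum, ← Finsupp.mul_sum, hf.2.1, hg.2.1, mul_one, mul_one, hab]
  · rcases Finset.mem_union.1 (Finsupp.support_add hx) with h | h
    · exact hf.2.2 (Finsupp.support_smul h)
    · exact hg.2.2 (Finsupp.support_smul h)

theorem IsAmenable.exists_sum_sub_lt {S ι : Type*} [Group S] [Fintype ι] (hS : IsAmenable S)
    (V : ι → lp (fun _ : S => ℝ) ∞) (h : ι → S) {u : ℝ} (hu : 0 < u) :
    ∃ k, ∑ i, (V i k - V i (h i * k)) < u := by
  obtain ⟨m, m_one, m_nonneg, m_inv⟩ := hS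
  by_contra! le_sum
  let W : lp (fun _ : S => ℝ) ∞ := ∑ i, (V i - translInfty (h i)⁻¹ (V i))
  have hW (k : S) : W k = ∑ i, (V i k - V i (h i * k)) := by
    rw [lp.coeFn_sum, Finset.sum_apply]
    refine Finset.sum_congr rfl fun i _ => ?_
    rw [lp.coeFn_sub, Pi.sub_apply, translInfty_apply, inv_inv]
  have mean_eq_zero : m W = 0 := (map_sum m _ _).trans <| Finset.sum_eq_zero fun i _ => by
    rw [map_sub, m_inv, sub_self]
  have u_le := m_nonneg (W - u • 1) fun k => by
    change 0 ≤ W k - u * 1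
    linarith [hW k, le_sum k]
  rw [map_sub, map_smul, m_one, mean_eq_zero, smul_eq_mul] at u_le
  linarith

/-- Reiter's condition, by the Day–Namioka convexity trick: a functional on a finite power of `ℓ¹`
separating `0` from the vectors `(f - h f)_h` would be a finite family of bounded functions `V h`
with `∑ h, (V h k - V h (h k))` bounded below by a positive constant. -/
theorem IsAmenable.exists_norm_sub_mapDomain_lt {S : Subgroup G} (hS : IsAmenable S) (E : Finset S)
    {ε : ℝ} (hε : 0 < ε) :
    ∃ f ∈ finProb (S : Set G),
      ∀ h ∈ E, ‖finsuppToLp ℝ 1 G (f - f.mapDomain ((h : G) * ·))‖ < ε := by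
  classical
  let Φ : (G →₀ ℝ) →ₗ[ℝ] (E → lp (fun _ : G => ℝ) 1) := LinearMap.pi fun h =>
    finsuppToLp ℝ 1 G ∘ₗ (LinearMap.id - Finsupp.lmapDomain ℝ ℝ ((h : G) * ·))
  suffices zero_mem : 0 ∈ closure (Φ '' finProb S) by
    obtain ⟨_, ⟨f, hf, rfl⟩, hd⟩ := Metric.mem_closure_iff.1 zero_mem ε hε
    rw [dist_zero_left] at hd
    exact ⟨f, hf, fun h hh => (norm_le_pi_norm (Φ f) ⟨h, hh⟩).trans_lt hd⟩
  by_contra hΦ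
  obtain ⟨φ, u, hu_pos, hu⟩ := geometric_hahn_banach_point_closed
    ((convex_finProb _).linear_image Φ).closure isClosed_closure hΦ
  rw [map_zero] at hu_pos
  let v (h : E) (x : G) : E → lp (fun _ : G => ℝ) 1 := Pi.single h (lp.single 1 x 1)
  have norm_le (h : E) (x : G) : ‖φ (v h x)‖ ≤ ‖φ‖ := by
    simpa [v, Pi.norm_single, lp.norm_single] using φ.le_opNorm (v h x)
  let V (h : E) : lp (fun _ : S => ℝ) ∞ :=
    ⟨fun k => φ (v h k), memℓp_infty ⟨‖φ‖, forall_mem_range.2 fun k => norm_le h k⟩⟩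
  have expand (k : S) : Φ (.single k 1) = ∑ h : E, (v h k - v h (h * k)) := by
    rw [← Finset.univ_sum_single (Φ (.single k 1))]
    refine Finset.sum_congr rfl fun h _ => ?_
    simp only [v]
    rw [← Pi.single_sub, ← finsuppToLp_single, ← finsuppToLp_single, ← map_sub,
      ← Finsupp.mapDomain_single (f := ((h : G) * ·))]
    rfl
  obtain ⟨k, hk⟩ := hS.exists_sum_sub_lt V (fun h : E => (h : S)) hu_pos
  have lt_u := hu _ (subset_closure ⟨_, single_mem_finProb k.2, rfl⟩)
  rw [expand, map_sum] at lt_u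
  simp only [map_sub] at lt_u
  exact lt_asymm lt_u hk

end Reiter

section SquareRoot

variable {S : Type*}

theorem norm_sq_eq_tsum (ξ : ℓ²(S, ℂ)) : ‖ξ‖ ^ 2 = ∑' s, ‖ξ s‖ ^ 2 := by
  simpa using lp.norm_rpow_eq_tsum (p := 2) (by norm_num) ξ

theorem norm_finsuppToLp_one (f : S →₀ ℝ) : ‖finsuppToLp ℝ 1 S f‖ = ∑' s, |f s| := by
  simpa [finsuppToLp_apply] using lp.norm_eq_tsum_rpow (p := 1) (by norm_num) (finsuppToLp ℝ 1 S f)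

/-- The pointwise square root of a function, as a vector in `ℓ²`. It carries probability measures
to unit vectors. -/
def sqrtVec (f : S →₀ ℝ) : ℓ²(S, ℂ) :=
  finsuppToLp ℂ 2 S (f.mapRange (fun a => (√a : ℂ)) (by simp))

theorem sqrtVec_apply (f : S →₀ ℝ) (s : S) : sqrtVec f s = (√(f s) : ℂ) := rfl

theorem norm_sqrtVec_sq {f : S →₀ ℝ} (hf : 0 ≤ f) : ‖sqrtVec f‖ ^ 2 = f.sum fun _ a => a := by
  rw [norm_sq_eq_tsum, Finsupp.sum, tsum_eq_sum (s := f.support)]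
  · refine Finset.sum_congr rfl fun s _ => ?_
    rw [sqrtVec_apply, Complex.norm_real, Real.norm_eq_abs, sq_abs, Real.sq_sqrt (hf s)]
  · intro s hs
    rw [sqrtVec_apply, Finsupp.notMem_support_iff.1 hs]
    simp

theorem sq_sqrt_sub_sqrt_le {a b : ℝ} (ha : 0 ≤ a) (hb : 0 ≤ b) : (√a - √b) ^ 2 ≤ |a - b| := by
  calc (√a - √b) ^ 2 = |√a - √b| * |√a - √b| := by rw [abs_mul_abs_self, sq]
    _ ≤ |√a - √b| * |√a + √b| := by
      refine mul_le_mul_of_nonneg_left ?_ (abs_nonneg _)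
      rw [abs_of_nonneg (add_nonneg a.sqrt_nonneg b.sqrt_nonneg), abs_sub_le_iff]
      constructor <;> linarith [a.sqrt_nonneg, b.sqrt_nonneg]
    _ = |a - b| := by
      rw [← abs_mul, mul_comm, ← sq_sub_sq, Real.sq_sqrt ha, Real.sq_sqrt hb]

theorem norm_sqrtVec_sub_sq_le {f g : S →₀ ℝ} (hf : 0 ≤ f) (hg : 0 ≤ g) :
    ‖sqrtVec f - sqrtVec g‖ ^ 2 ≤ ‖finsuppToLp ℝ 1 S (f - g)‖ := by
  rw [norm_sq_eq_tsum, norm_finsuppToLp_one]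
  refine Summable.tsum_le_tsum (fun s => ?_) ?_ ?_
  · rw [lp.coeFn_sub, Pi.sub_apply, sqrtVec_apply, sqrtVec_apply, ← Complex.ofReal_sub,
      Complex.norm_real, Real.norm_eq_abs, sq_abs]
    exact sq_sqrt_sub_sqrt_le (hf s) (hg s)
  · simpa using (lp.memℓp (sqrtVec f - sqrtVec g)).summable (by norm_num)
  · exact (summable_of_hasFiniteSupport (f - g).hasFiniteSupport).abs

theorem permRep_sqrtVec {Y : Type*} [MulAction G Y] (g : G) (f : Y →₀ ℝ) :
    permRep G Y g (sqrtVec f) = sqrtVec (f.mapDomain (g • ·)) := by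
  ext y
  rw [permRep_apply, sqrtVec_apply, sqrtVec_apply,
    ← Finsupp.mapDomain_apply (MulAction.injective g) f, smul_inv_smul]

end SquareRoot

section Hulanicki

theorem IsAmenable.exists_norm_inner_permRep_sub_indicator_le {S : Subgroup G} (hS : IsAmenable S)
    (E : Finset G) {ε : ℝ} (hε : 0 < ε) :
    ∃ ξ : ℓ²(G, ℂ), ‖ξ‖ = 1 ∧ ∀ t ∈ E,
      ‖inner ℂ ξ (permRep G G t ξ) - (S : Set G).indicator 1 t‖ ≤ ε := by
  classical
  obtain ⟨f, ⟨f_nonneg, f_sum, f_supp⟩, hf⟩ :=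
    hS.exists_norm_sub_mapDomain_lt (E.subtype (· ∈ S)) (pow_pos hε 2)
  have norm_eq : ‖sqrtVec f‖ = 1 := by
    rw [← sq_eq_sq₀ (norm_nonneg _) zero_le_one, norm_sqrtVec_sq f_nonneg, f_sum, one_pow]
  have eq_zero {x : G} (hx : x ∉ S) : sqrtVec f x = 0 := by
    have : f x = 0 := Finsupp.notMem_support_iff.1 fun h => hx (f_supp h)
    simp [sqrtVec_apply, this]
  refine ⟨sqrtVec f, norm_eq, fun t ht => ?_⟩
  by_cases htS : t ∈ S
  · have close : ‖permRep G G t (sqrtVec f) - sqrtVec f‖ ≤ ε := by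
      rw [norm_sub_rev, permRep_sqrtVec]
      refine (sq_le_sq₀ (norm_nonneg _) hε.le).1 ?_
      refine (norm_sqrtVec_sub_sq_le f_nonneg (Finsupp.mapDomain_nonneg f_nonneg)).trans
        (hf ⟨t, htS⟩ (by simpa using ht)).le
    rw [indicator_of_mem htS, Pi.one_apply,
      show (1 : ℂ) = inner ℂ (sqrtVec f) (sqrtVec f) by
        rw [inner_self_eq_norm_sq_to_K, norm_eq]; simp,
      ← inner_sub_right]
    simpa [norm_eq] using (norm_inner_le_norm (𝕜 := ℂ) (sqrtVec f) _).trans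
      (mul_le_mul_of_nonneg_left close (norm_nonneg _))
  · have orthogonal : inner ℂ (sqrtVec f) (permRep G G t (sqrtVec f)) = 0 := by
      rw [lp.inner_eq_tsum]
      refine (tsum_congr fun x => ?_).trans tsum_zero
      rw [permRep_apply]
      by_cases hx : x ∈ S
      · rw [eq_zero (x := t⁻¹ • x) fun h => htS ?_, inner_zero_right]
        simpa using S.mul_mem hx (S.inv_mem h)
      · rw [eq_zero hx, inner_zero_left]
    rw [orthogonal, indicator_of_notMem htS, sub_zero, norm_zero]
    exact hε.le

variable {Y : Type*} [MulAction G Y]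

/-- The sum over a subgroup: the restriction of elements of the group algebra to `S`, followed by
the trivial character. -/
def subgroupSum (S : Subgroup G) : (G →₀ ℂ) →ₗ[ℂ] ℂ :=
  Finsupp.linearCombination ℂ ((S : Set G).indicator 1)

theorem inner_groupAlgRep_single_eq_subgroupSum [DecidableEq Y] (c : G →₀ ℂ) (y : Y) :
    inner ℂ (lp.single 2 y (1 : ℂ) : ℓ²(Y, ℂ)) (groupAlgRep G Y c (lp.single 2 y 1)) =
      subgroupSum (MulAction.stabilizer G y) c := by
  induction c using Finsupp.induction_linear with
  | zero => simp
  | add c d hc hd => rw [map_add, map_add, add_apply, inner_add_right, hc, hd]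
  | single t z =>
    rw [groupAlgRep_single, smul_apply, inner_smul_right, permRep_single,
      lp.inner_single_left, lp.single_apply, subgroupSum, Finsupp.linearCombination_single]
    by_cases ht : t • y = y <;> simp [ht, Set.indicator]

theorem norm_subgroupSum_stabilizer_le (c : G →₀ ℂ) (y : Y) :
    ‖subgroupSum (MulAction.stabilizer G y) c‖ ≤ ‖groupAlgRep G Y c‖ := by
  classical
  rw [← inner_groupAlgRep_single_eq_subgroupSum]
  exact norm_inner_single_le _ _

/-- The trivial representation of an amenable subgroup is weakly contained in `λ`. -/
theorem IsAmenable.norm_subgroupSum_le {S : Subgroup G} (hS : IsAmenable S) (c : G →₀ ℂ) :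
    ‖subgroupSum S c‖ ≤ ‖groupAlgRep G G c‖ := by
  refine le_of_forall_pos_le_add fun ε hε => ?_
  obtain ⟨δ, hδ, sum_le⟩ := exists_pos_norm_sum_mul_le c.support c hε
  obtain ⟨ξ, norm_ξ, hξ⟩ := hS.exists_norm_inner_permRep_sub_indicator_le c.support hδ
  have bound : ‖inner ℂ ξ (groupAlgRep G G c ξ)‖ ≤ ‖groupAlgRep G G c‖ := by
    simpa [norm_ξ] using (norm_inner_le_norm ξ _).trans
      (mul_le_mul_of_nonneg_left ((groupAlgRep G G c).le_opNorm ξ) (norm_nonneg ξ))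
  have close : ‖inner ℂ ξ (groupAlgRep G G c ξ) - subgroupSum S c‖ ≤ ε :=
    calc _ = ‖∑ t ∈ c.support, c t * (inner ℂ ξ (permRep G G t ξ) -
            (S : Set G).indicator 1 t)‖ := by
          rw [groupAlgRep_apply, Finsupp.sum, inner_sum, subgroupSum,
            Finsupp.linearCombination_apply, Finsupp.sum, ← Finset.sum_sub_distrib]
          simp only [inner_smul_right, smul_eq_mul, mul_sub]
      _ ≤ ε := sum_le _ hξ
  have tri := norm_le_norm_sub_add (subgroupSum S c) (inner ℂ ξ (groupAlgRep G G c ξ))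
  rw [norm_sub_rev] at tri
  linarith

end Hulanicki

section JointAlgebra

theorem norm_fst_le_norm_snd {A B : Type*} [CStarAlgebra A] [CStarAlgebra B]
    {D : StarSubalgebra ℂ (A × B)} (hD : IsClosed (D : Set (A × B)))
    (hinj : ∀ a : A, (a, (0 : B)) ∈ D → a = 0) {d : A × B} (hd : d ∈ D) : ‖d.1‖ ≤ ‖d.2‖ := by
  have : IsClosed (D : Set (A × B)) := hD
  let φ : D →⋆ₐ[ℂ] B := (StarAlgHom.snd ℂ A B).comp D.subtype
  have φ_injective : Function.Injective φ := by
    refine (injective_iff_map_eq_zero φ).2 ?_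
    rintro ⟨⟨a, b⟩, hab⟩ (rfl : b = 0)
    exact Subtype.ext (Prod.ext (hinj a hab) rfl)
  exact (norm_fst_le d).trans_eq (NonUnitalStarAlgHom.norm_map φ φ_injective ⟨d, hd⟩).symm

variable (G) (Y : Type*) [MulAction G Y]

/-- The C⋆-algebra generated by the direct sum of the regular representation and the permutation
representation on `ℓ²(Y)`. -/
def jointAlg : StarSubalgebra ℂ (BL G × BL Y) :=
  (StarAlgebra.adjoin ℂ (range ((permRep G G).prod (permRep G Y)))).topologicalClosure

theorem isClosed_jointAlg : IsClosed (jointAlg G Y : Set (BL G × BL Y)) :=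
  StarSubalgebra.isClosed_topologicalClosure _

variable {G Y}

theorem mem_adjoin_range_prod {d : BL G × BL Y} :
    d ∈ StarAlgebra.adjoin ℂ (range ((permRep G G).prod (permRep G Y))) ↔
      ∃ c, (groupAlgRep G G c, groupAlgRep G Y c) = d := by
  have hu (g : G) : star ((permRep G G).prod (permRep G Y) g) =
      (permRep G G).prod (permRep G Y) g⁻¹ :=
    Prod.ext (star_permRep g) (star_permRep g)
  rw [← StarSubalgebra.mem_toSubalgebra, ← Subalgebra.mem_toSubmodule, adjoin_range_eq_span hu,
    ← Finsupp.range_linearCombination, LinearMap.mem_range]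
  refine exists_congr fun c => ?_
  have : Finsupp.linearCombination ℂ ((permRep G G).prod (permRep G Y)) =
      (groupAlgRep G G).prod (groupAlgRep G Y) := by
    ext g <;> simp [groupAlgRep]
  rw [this]; rfl

theorem groupAlgRep_mem_jointAlg (c : G →₀ ℂ) :
    (groupAlgRep G G c, groupAlgRep G Y c) ∈ jointAlg G Y :=
  StarSubalgebra.le_topologicalClosure _ (mem_adjoin_range_prod.2 ⟨c, rfl⟩)

theorem exists_norm_sub_lt_of_mem_jointAlg {d : BL G × BL Y} (hd : d ∈ jointAlg G Y) {ε : ℝ}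
    (hε : 0 < ε) :
    ∃ c : G →₀ ℂ, ‖d.1 - groupAlgRep G G c‖ < ε ∧ ‖d.2 - groupAlgRep G Y c‖ < ε := by
  obtain ⟨_, hb, hdb⟩ := Metric.mem_closure_iff.1 hd ε hε
  obtain ⟨c, rfl⟩ := mem_adjoin_range_prod.1 hb
  rw [dist_eq_norm] at hdb
  exact ⟨c, (norm_fst_le _).trans_lt hdb, (norm_snd_le _).trans_lt hdb⟩

theorem fst_mem_redCstar {d : BL G × BL Y} (hd : d ∈ jointAlg G Y) : d.1 ∈ redCstar G := by
  refine isClosed_redCstar.closure_subset (Metric.mem_closure_iff.2 fun ε hε => ?_)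
  obtain ⟨c, hc, -⟩ := exists_norm_sub_lt_of_mem_jointAlg hd hε
  refine ⟨_, ?_, (dist_eq_norm ..).trans_lt hc⟩
  rw [redCstar_eq]
  exact StarSubalgebra.le_topologicalClosure _ (mem_adjoin_range_permRep.2 ⟨c, rfl⟩)

theorem mul_mem_jointAlg {x a : BL G} (hx : x ∈ redCstar G) (ha : (a, (0 : BL Y)) ∈ jointAlg G Y) :
    (x * a, (0 : BL Y)) ∈ jointAlg G Y ∧ (a * x, (0 : BL Y)) ∈ jointAlg G Y := by
  have closed := (isClosed_jointAlg G Y).preimage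
      (f := fun x : BL G => (x * a, (0 : BL Y))) (by fun_prop)
  have closed' := (isClosed_jointAlg G Y).preimage
      (f := fun x : BL G => (a * x, (0 : BL Y))) (by fun_prop)
  rw [redCstar_eq] at hx
  refine closure_minimal (fun y hy => ?_) (closed.inter closed') hx
  obtain ⟨c, rfl⟩ := mem_adjoin_range_permRep.1 hy
  constructor
  · simpa using! mul_mem (groupAlgRep_mem_jointAlg (Y := Y) c) ha
  · simpa using! mul_mem ha (groupAlgRep_mem_jointAlg (Y := Y) c)

/-- The weak containment of the trivial representation of the stabilizer gives
`1 = |∑_S (1 - c) + ∑_S c| ≤ ‖λ (1 - c)‖ + ‖λ_Y c‖`, where `S` is the stabilizer. -/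
theorem one_zero_notMem_jointAlg {y : Y} (hy : IsAmenable (MulAction.stabilizer G y)) :
    ((1, 0) : BL G × BL Y) ∉ jointAlg G Y := by
  intro h
  obtain ⟨c, hc, hcY⟩ := exists_norm_sub_lt_of_mem_jointAlg h one_half_pos
  set S := MulAction.stabilizer G y
  have sum_one : subgroupSum S (Finsupp.single 1 1) = 1 := by
    simp [subgroupSum, S.one_mem]
  have bound := hy.norm_subgroupSum_le (Finsupp.single 1 1 - c)
  rw [map_sub, map_sub, sum_one, groupAlgRep_single, one_smul, map_one] at bound
  have boundY := norm_subgroupSum_stabilizer_le c y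
  rw [zero_sub, norm_neg] at hcY
  have tri := norm_le_norm_sub_add 1 (subgroupSum S c)
  rw [norm_one] at tri
  linarith

variable (G Y) in
/-- The kernel of the projection of `jointAlg G Y` onto its second factor, as an ideal of the
reduced C⋆-algebra. -/
def jointKer : TwoSidedIdeal (redCstar G) :=
  TwoSidedIdeal.mk' {a : redCstar G | ((a : BL G), (0 : BL Y)) ∈ jointAlg G Y}
    (zero_mem (jointAlg G Y))
    (fun {x y} hx hy => by simpa using! (jointAlg G Y).add_mem hx hy)
    (fun {x} hx => by simpa using! (jointAlg G Y).neg_mem hx)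
    (fun {x y} hy => (mul_mem_jointAlg x.2 hy).1)
    (fun {x y} hx => (mul_mem_jointAlg y.2 hx).2)

theorem mem_jointKer {a : redCstar G} :
    a ∈ jointKer G Y ↔ ((a : BL G), (0 : BL Y)) ∈ jointAlg G Y :=
  TwoSidedIdeal.mem_mk' ..

theorem isClosed_jointKer : IsClosed (jointKer G Y : Set (redCstar G)) := by
  have : (jointKer G Y : Set (redCstar G)) =
      (fun a : redCstar G => ((a : BL G), (0 : BL Y))) ⁻¹' jointAlg G Y :=
    Set.ext fun _ => mem_jointKer
  rw [this]
  exact (isClosed_jointAlg G Y).preimage (by fun_prop)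

theorem IsCstarSimple.norm_groupAlgRep_le (hG : IsCstarSimple G) {y : Y}
    (hy : IsAmenable (MulAction.stabilizer G y)) (c : G →₀ ℂ) :
    ‖groupAlgRep G G c‖ ≤ ‖groupAlgRep G Y c‖ := by
  have ker_eq_bot : jointKer G Y = ⊥ := (hG _ isClosed_jointKer).resolve_right fun htop =>
    one_zero_notMem_jointAlg hy (mem_jointKer.1 ((TwoSidedIdeal.one_mem_iff _).2 htop))
  have eq_zero (a : BL G) (ha : (a, (0 : BL Y)) ∈ jointAlg G Y) : a = 0 := by
    have mem_ker : (⟨a, fst_mem_redCstar ha⟩ : redCstar G) ∈ jointKer G Y := mem_jointKer.2 ha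
    rw [ker_eq_bot, TwoSidedIdeal.mem_bot] at mem_ker
    exact congrArg Subtype.val mem_ker
  exact norm_fst_le_norm_snd (isClosed_jointAlg G Y) eq_zero
    (d := (groupAlgRep G G c, groupAlgRep G Y c)) (groupAlgRep_mem_jointAlg c)

theorem IsCstarSimple.exists_isState_permRep_eq_zero (hG : IsCstarSimple G) {y : Y}
    (hy : IsAmenable (MulAction.stabilizer G y)) :
    ∃ ψ : StrongDual ℂ (BL Y), IsState ψ ∧ ∀ s ≠ 1, ψ (permRep G Y s) = 0 := by
  obtain ⟨ψ, hψ, hψ₀⟩ := exists_isState_of_forall_one_le_norm_one_sub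
    (J := (LinearMap.ker (Finsupp.lapply (1 : G))).map (groupAlgRep G Y)) <| by
      rintro _ ⟨c, hc : c 1 = 0, rfl⟩
      rw [← map_one (permRep G Y), ← one_smul ℂ (permRep G Y 1), ← groupAlgRep_single, ← map_sub]
      refine le_trans ?_ ((norm_apply_one_le_norm_groupAlgRep _).trans
        (hG.norm_groupAlgRep_le hy _))
      simp [hc]
  refine ⟨ψ, hψ, fun s hs => hψ₀ _ ⟨.single s 1, ?_, ?_⟩⟩
  · exact Finsupp.single_eq_of_ne hs.symm
  · rw [groupAlgRep_single, one_smul]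

end JointAlgebra

variable {X : Type*} [TopologicalSpace X] [CompactSpace X] [T2Space X] [Nonempty X] [MulAction G X]
  [ContinuousConstSMul G X]

theorem IsBoundary.not_isCstarSimple (hX : IsBoundary G X)
    (hst : ∀ x : X, IsAmenable (MulAction.stabilizer G x)) {H : Subgroup G} (hH : IsAmenable H)
    (hrec : IsRecurrent H) : ¬ IsCstarSimple G := by
  intro hG
  obtain ⟨F, one_notMem, hF⟩ := isRecurrent_iff.1 hrec
  obtain ⟨t, htF, w, htw⟩ := exists_mem_germStabilizer (hX.exists_mem_smul_eq hH hF)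
  obtain ⟨ψ, hψ, hψ₀⟩ := hG.exists_isState_permRep_eq_zero (hst w)
  obtain ⟨g, hg⟩ := hX.exists_norm_conjDual_permRep_sub_one_le hψ (o := id) (fun _ _ => rfl)
    Function.injective_id (mem_germStabilizer.1 htw) one_half_pos
  have conj_ne_one : g⁻¹ * t * g ≠ 1 := fun h => ne_of_mem_of_not_mem htF one_notMem <| by
    simpa [mul_assoc, inv_mul_eq_one, eq_comm] using h
  rw [conjDual_permRep, hψ₀ _ conj_ne_one] at hg
  norm_num at hg

/-- A discrete group is C*-simple if and only if it has no amenable recurrent subgroup that is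
either finite normal or normalish. -/
theorem cstarSimple_iff_no_amenable_recurrent_finiteNormal_or_normalish
    (G : Type u) [Group G] :
    IsCstarSimple G ↔
      ¬ ∃ H : Subgroup G, IsAmenable H ∧ IsRecurrent H ∧
        (((H : Set G).Finite ∧ H.Normal) ∨ IsNormalish H) := by
  obtain ⟨X, _, _, _, _, _, _, hX, hst⟩ := exists_isBoundary G
  constructor
  · rintro hG ⟨H, hH, hrec, -⟩
    exact hX.not_isCstarSimple (fun x => hst x _ le_rfl) hH hrec hG
  · intro h
    by_contra hG
    obtain ⟨F, one_notMem, hF⟩ := hX.exists_finset_of_not_isCstarSimple hG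
    exact h (hX.exists_isAmenable_isRecurrent hst one_notMem hF)
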